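/- arXiv:2409.05744 — 5 statements merged into one kernel-verified Lean document; each statement's English description precedes it below -/
import Mathlib

section
/- Let X be a uniformly convex real Banach space, let r be a Helly sequence for X, and let 1 ≤ k ≤ n. If K_1, …, K_n are convex subsets of X such that for every subset J ⊆ {1,…,n} with |J| = k the intersection ⋂_{j∈J} K_j contains a point of the closed unit ball of X, then there exists a point x ∈ X such that dist(x, K_i) ≤ r_k for all i ∈ {1,…,n} (where dist(x,S) = inf_{s∈S} ‖x−s‖). -/
open scoped Classical

noncomputable section

/-- `y` is quasi-orthogonal to `x`: some nonzero continuous linear functional attains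
its norm on `x` and vanishes on `y`. -/
def QuasiOrth {X : Type*} [NormedAddCommGroup X] [NormedSpace ℝ X] (y x : X) : Prop :=
  ∃ f : X →L[ℝ] ℝ, f ≠ 0 ∧ f x = ‖f‖ * ‖x‖ ∧ f y = 0

/-- `ζ_X(ε) = inf {‖x + ε y‖ : ‖x‖ = ‖y‖ = 1, y ⌐ x}`. -/
def zetaConv (X : Type*) [NormedAddCommGroup X] [NormedSpace ℝ X] (ε : ℝ) : ℝ :=
  sInf {t : ℝ | ∃ x y : X, ‖x‖ = 1 ∧ ‖y‖ = 1 ∧ QuasiOrth y x ∧ t = ‖x + ε • y‖}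

/-- `ζ⁺_X(ε) = sup {‖x + ε y‖ : ‖x‖ = ‖y‖ = 1, y ⌐ x}`. -/
def zetaSmooth (X : Type*) [NormedAddCommGroup X] [NormedSpace ℝ X] (ε : ℝ) : ℝ :=
  sSup {t : ℝ | ∃ x y : X, ‖x‖ = 1 ∧ ‖y‖ = 1 ∧ QuasiOrth y x ∧ t = ‖x + ε • y‖}

/-- The modulus of convexity `δ_X(ε)`. -/
def modConv (X : Type*) [NormedAddCommGroup X] [NormedSpace ℝ X] (ε : ℝ) : ℝ :=
  sInf {t : ℝ | ∃ x y : X, ‖x‖ ≤ 1 ∧ ‖y‖ ≤ 1 ∧ ε ≤ ‖x - y‖ ∧ t = 1 - ‖x + y‖ / 2}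

/-- The modulus of smoothness `ρ_X(τ)`. -/
def modSmooth (X : Type*) [NormedAddCommGroup X] [NormedSpace ℝ X] (τ : ℝ) : ℝ :=
  sSup {t : ℝ | ∃ x y : X, ‖x‖ = 1 ∧ ‖y‖ = τ ∧ t = (‖x + y‖ + ‖x - y‖) / 2 - 1}

/-- `X` is uniformly convex: the modulus of convexity is positive on `(0, 2]`. -/
def UnifConvex (X : Type*) [NormedAddCommGroup X] [NormedSpace ℝ X] : Prop :=
  ∀ ε ∈ Set.Ioc (0 : ℝ) 2, 0 < modConv X ε

/-- `X` is uniformly smooth: `ρ_X(τ)/τ → 0` as `τ → 0⁺`. -/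
def UnifSmooth (X : Type*) [NormedAddCommGroup X] [NormedSpace ℝ X] : Prop :=
  Filter.Tendsto (fun τ => modSmooth X τ / τ) (nhdsWithin 0 (Set.Ioi 0)) (nhds 0)

/-- A Helly sequence for `X`: `r : {1,2,…} → (0,1]` with `r 1 = 1` and
`r (j+1) * ζ_X (r (j+1)) = r j` for all `j ≥ 1`. -/
def IsHellySeq (X : Type*) [NormedAddCommGroup X] [NormedSpace ℝ X] (r : ℕ → ℝ) : Prop :=
  (∀ j : ℕ, 1 ≤ j → r j ∈ Set.Ioc (0 : ℝ) 1) ∧ r 1 = 1 ∧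
    ∀ j : ℕ, 1 ≤ j → r (j + 1) * zetaConv X (r (j + 1)) = r j

end

/-!
Suppose that every point is farther than `ρ = r k` from some `K i`. Choose sets greedily: first one
far from `0`, then repeatedly one far from the point `z₀` of least norm in the intersection `C` of
the sets chosen so far. By induction, every `z` common to the first `j` chosen sets satisfies
`r j * ‖z‖ > ρ`, which for `j = k` is incompatible with a common point in the unit ball.

For the inductive step let `s = r (j + 1)`, and let `z` be in `C` and in the new set. If
`s * ‖z‖ ≤ ρ`, then `‖z - z₀‖ > ρ ≥ s * ‖z₀‖`, while a functional norming `z₀` and separating `C`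
from the ball of radius `‖z₀‖` is nonnegative at `z - z₀`. The definition of `ζ` only concerns
directions in the kernel of such a functional, but a planar argument shows that those are the worst
ones, so `‖z‖ ≥ ζ s * ‖z₀‖` and `s * ‖z‖ ≥ s * ζ s * ‖z₀‖ = r j * ‖z₀‖ > ρ`, a contradiction.

The sets need not be closed, so they are first replaced by convex hulls of finitely many of the
given points, for which the point of least norm exists.
-/

section ConvexSets

variable {ι E : Type*} [AddCommGroup E] [Module ℝ E] [TopologicalSpace E]
  [IsTopologicalAddGroup E] [ContinuousSMul ℝ E]

lemma exists_convex_isCompact_subset_of_finset_inter [Finite ι] {K : ι → Set E}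
    (hconv : ∀ i, Convex ℝ (K i)) {𝒥 : Set (Finset ι)} {B : Set E}
    (hB : ∀ J ∈ 𝒥, ∃ p ∈ B, ∀ j ∈ J, p ∈ K j) :
    ∃ L : ι → Set E, (∀ i, Convex ℝ (L i)) ∧ (∀ i, IsCompact (L i)) ∧ (∀ i, L i ⊆ K i) ∧
      ∀ J ∈ 𝒥, ∃ p ∈ B, ∀ j ∈ J, p ∈ L j := by
  choose! p hpB hpK using hB
  refine ⟨fun i => convexHull ℝ (p '' {J ∈ 𝒥 | i ∈ J}), fun i => convex_convexHull ℝ _,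
    fun i => (Set.toFinite _).isCompact_convexHull ℝ, fun i => convexHull_min ?_ (hconv i),
    fun J hJ => ⟨p J, hpB J hJ, fun j hj => subset_convexHull ℝ _ ⟨J, ⟨hJ, hj⟩, rfl⟩⟩⟩
  rintro _ ⟨J, ⟨hJ, hi⟩, rfl⟩
  exact hpK J hJ i hi

end ConvexSets

section NormedSpace

variable {X : Type*} [NormedAddCommGroup X] [NormedSpace ℝ X]

lemma exists_dual_eq_norm_mul_norm_of_isMinOn_norm {C : Set X} (hC : Convex ℝ C) {z₀ : X}
    (hz₀C : z₀ ∈ C) (hz₀ : z₀ ≠ 0) (hmin : IsMinOn norm C z₀) :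
    ∃ f : X →L[ℝ] ℝ, f ≠ 0 ∧ f z₀ = ‖f‖ * ‖z₀‖ ∧ IsMinOn f C z₀ := by
  have hpos : 0 < ‖z₀‖ := norm_pos_iff.mpr hz₀
  have hdisj : Disjoint (Metric.ball (0 : X) ‖z₀‖) C :=
    Set.disjoint_left.mpr fun z hz hzC => (mem_ball_zero_iff.mp hz).not_ge (hmin hzC)
  obtain ⟨f, s, hball, hCs⟩ :=
    geometric_hahn_banach_open (convex_ball _ _) Metric.isOpen_ball hC hdisj
  have hs : 0 < s := by simpa using hball 0 (Metric.mem_ball_self hpos)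
  have hclosedBall : ∀ a ∈ Metric.closedBall (0 : X) ‖z₀‖, f a ≤ s := by
    rw [← closure_ball (0 : X) hpos.ne']
    exact closure_minimal (fun a ha => (hball a ha).le) (isClosed_le f.continuous continuous_const)
  have hnorm : ‖f‖ * ‖z₀‖ ≤ s := by
    rw [← le_div_iff₀ hpos]
    refine f.opNorm_bound_of_ball_bound hpos s fun a ha => abs_le.mpr ⟨?_, hclosedBall a ha⟩
    have := hclosedBall (-a) (by simpa using ha)
    rw [map_neg] at this
    linarith
  have hfz₀ : f z₀ ≤ ‖f‖ * ‖z₀‖ := (le_abs_self _).trans (f.le_opNorm z₀)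
  have hsz₀ : s ≤ f z₀ := hCs z₀ hz₀C
  refine ⟨f, ?_, by linarith, fun z hz => (hfz₀.trans hnorm).trans (hCs z hz)⟩
  rintro rfl
  simp only [zero_apply] at hsz₀
  linarith

namespace QuasiOrth

lemma norm_smul_le_norm_smul_add_smul {x y : X} (h : QuasiOrth y x) (a b : ℝ) :
    ‖a • x‖ ≤ ‖a • x + b • y‖ := by
  obtain ⟨f, hf, hfx, hfy⟩ := h
  refine le_of_mul_le_mul_left ?_ (norm_pos_iff.mpr hf)
  calc ‖f‖ * ‖a • x‖ = ‖f (a • x + b • y)‖ := by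
        simp only [map_add, map_smul, hfx, hfy, smul_zero, add_zero, norm_smul, norm_mul, norm_norm]
        ring
    _ ≤ ‖f‖ * ‖a • x + b • y‖ := f.le_opNorm _

lemma norm_add_smul_le {x y : X} (h : QuasiOrth y x) (hx : ‖x‖ = 1) (hy : ‖y‖ = 1)
    {α β ε : ℝ} (hα : 0 ≤ α) (hβ : 0 ≤ β) (hε : 0 ≤ ε) (hεw : ε ≤ ‖α • x + β • y‖) :
    ‖x + ε • y‖ ≤ ‖x + (α • x + β • y)‖ := by
  -- A multiple of `x + ε • y` is a nonnegative combination of `x + w` with either `y` or `x`,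
  -- according to the sign of `(1 + α) * ε - β`.
  set w := α • x + β • y
  have hw : x + w = (1 + α) • x + β • y := by simp only [w]; module
  have hlower : 1 + α ≤ ‖x + w‖ := by
    have := h.norm_smul_le_norm_smul_add_smul (1 + α) β
    rwa [← hw, norm_smul, hx, mul_one, Real.norm_of_nonneg (by positivity)] at this
  rcases le_or_gt β ((1 + α) * ε) with hle | hlt
  · have hupper : (1 + α) * ε ≤ β + α * ‖x + w‖ := by
      calc (1 + α) * ε ≤ (1 + α) * ‖w‖ := by gcongr
        _ = ‖β • y + α • (x + w)‖ := by
          rw [← norm_smul_of_nonneg (by positivity)]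
          congr 1
          simp only [w]
          module
        _ ≤ β + α * ‖x + w‖ := by
          simpa only [norm_smul_of_nonneg hβ, norm_smul_of_nonneg hα, hy, mul_one] using
            norm_add_le (β • y) (α • (x + w))
    refine le_of_mul_le_mul_left ?_ (show 0 < 1 + α by positivity)
    calc (1 + α) * ‖x + ε • y‖ = ‖(x + w) + ((1 + α) * ε - β) • y‖ := by
          rw [← norm_smul_of_nonneg (by positivity), hw]
          congr 1
          module
      _ ≤ ‖x + w‖ + ((1 + α) * ε - β) := by
          simpa only [norm_smul_of_nonneg (sub_nonneg.mpr hle), hy, mul_one] using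
            norm_add_le (x + w) (((1 + α) * ε - β) • y)
      _ ≤ (1 + α) * ‖x + w‖ := by linarith
  · have hεβ : ε ≤ β := by nlinarith
    refine le_of_mul_le_mul_left ?_ (show 0 < β from lt_of_le_of_lt (by positivity) hlt)
    calc β * ‖x + ε • y‖ = ‖ε • (x + w) + (β - (1 + α) * ε) • x‖ := by
          rw [← norm_smul_of_nonneg hβ, hw]
          congr 1
          module
      _ ≤ ε * ‖x + w‖ + (β - (1 + α) * ε) := by
          simpa only [norm_smul_of_nonneg hε, norm_smul_of_nonneg (sub_nonneg.mpr hlt.le), hx,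
            mul_one] using norm_add_le (ε • (x + w)) ((β - (1 + α) * ε) • x)
      _ ≤ β * ‖x + w‖ := by nlinarith

end QuasiOrth

lemma zetaConv_le_of_quasiOrth {x y : X} (hx : ‖x‖ = 1) (hy : ‖y‖ = 1) (h : QuasiOrth y x)
    (ε : ℝ) : zetaConv X ε ≤ ‖x + ε • y‖ := by
  refine csInf_le ⟨0, ?_⟩ ⟨x, y, hx, hy, h, rfl⟩
  rintro _ ⟨x, y, -, -, -, rfl⟩
  exact norm_nonneg _

variable (X) in
lemma zetaConv_le_one_add_abs (ε : ℝ) : zetaConv X ε ≤ 1 + |ε| := by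
  by_cases h : ∃ x y : X, ‖x‖ = 1 ∧ ‖y‖ = 1 ∧ QuasiOrth y x
  · obtain ⟨x, y, hx, hy, hxy⟩ := h
    refine (zetaConv_le_of_quasiOrth hx hy hxy ε).trans ((norm_add_le _ _).trans_eq ?_)
    rw [norm_smul, hx, hy, mul_one, Real.norm_eq_abs]
  · -- In dimension at most one, `zetaConv X ε` is the infimum of the empty set, which is `0`.
    have hempty : {t : ℝ | ∃ x y : X, ‖x‖ = 1 ∧ ‖y‖ = 1 ∧ QuasiOrth y x ∧ t = ‖x + ε • y‖} = ∅ := by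
      refine Set.eq_empty_of_forall_notMem ?_
      rintro _ ⟨x, y, hx, hy, hxy, -⟩
      exact h ⟨x, y, hx, hy, hxy⟩
    rw [zetaConv, hempty, Real.sInf_empty]
    positivity

lemma zetaConv_le_norm_add {f : X →L[ℝ] ℝ} (hf : f ≠ 0) {x w : X} (hx : ‖x‖ = 1)
    (hfx : f x = ‖f‖ * ‖x‖) (hfw : 0 ≤ f w) {ε : ℝ} (hε : 0 ≤ ε) (hεw : ε ≤ ‖w‖) :
    zetaConv X ε ≤ ‖x + w‖ := by
  have hfpos : 0 < ‖f‖ := norm_pos_iff.mpr hf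
  obtain ⟨α, hα, v, rfl, hfv⟩ : ∃ α : ℝ, 0 ≤ α ∧ ∃ v, w = α • x + v ∧ f v = 0 := by
    refine ⟨f w / ‖f‖, by positivity, w - (f w / ‖f‖) • x, by abel, ?_⟩
    rw [map_sub, map_smul, hfx, hx, mul_one, smul_eq_mul, div_mul_cancel₀ _ hfpos.ne', sub_self]
  rcases eq_or_ne v 0 with rfl | hv₀
  · rw [add_zero, norm_smul_of_nonneg hα, hx, mul_one] at hεw
    calc zetaConv X ε ≤ 1 + |ε| := zetaConv_le_one_add_abs X ε
      _ ≤ 1 + α := by rw [abs_of_nonneg hε]; gcongr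
      _ = ‖(1 + α) • x‖ := by rw [norm_smul_of_nonneg (by positivity), hx, mul_one]
      _ = ‖x + (α • x + 0)‖ := by congr 1; module
  · obtain ⟨y, hy⟩ : ∃ y, y = ‖v‖⁻¹ • v := ⟨_, rfl⟩
    have hy₁ : ‖y‖ = 1 := hy ▸ norm_smul_inv_norm (𝕜 := ℝ) hv₀
    have hvy : v = ‖v‖ • y := by rw [hy, smul_inv_smul₀ (norm_ne_zero_iff.mpr hv₀)]
    have hyx : QuasiOrth y x := ⟨f, hf, hfx, by rw [hy, map_smul, hfv, smul_zero]⟩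
    rw [hvy] at hεw ⊢
    exact (zetaConv_le_of_quasiOrth hx hy₁ hyx ε).trans
      (hyx.norm_add_smul_le hx hy₁ hα (norm_nonneg v) hε hεw)

lemma zetaConv_mul_norm_le_of_isMinOn_norm {C : Set X} (hC : Convex ℝ C) {z₀ z : X}
    (hz₀C : z₀ ∈ C) (hmin : IsMinOn norm C z₀) (hz : z ∈ C) {ε : ℝ} (hε : 0 ≤ ε)
    (hεz : ε * ‖z₀‖ ≤ ‖z - z₀‖) : zetaConv X ε * ‖z₀‖ ≤ ‖z‖ := by
  rcases eq_or_ne z₀ 0 with rfl | hz₀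
  · simp
  have hpos : 0 < ‖z₀‖ := norm_pos_iff.mpr hz₀
  obtain ⟨f, hf, hfz₀, hfmin⟩ := exists_dual_eq_norm_mul_norm_of_isMinOn_norm hC hz₀C hz₀ hmin
  have hunit : ‖‖z₀‖⁻¹ • z₀‖ = 1 := norm_smul_inv_norm (𝕜 := ℝ) hz₀
  have hnormalized : zetaConv X ε ≤ ‖‖z₀‖⁻¹ • z₀ + ‖z₀‖⁻¹ • (z - z₀)‖ := by
    refine zetaConv_le_norm_add hf hunit ?_ ?_ hε ?_
    · rw [hunit, map_smul, hfz₀, smul_eq_mul]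
      field_simp
    · rw [map_smul, map_sub]
      exact mul_nonneg (by positivity) (sub_nonneg.mpr (hfmin hz))
    · rwa [norm_smul_of_nonneg (by positivity), ← div_eq_inv_mul, le_div_iff₀ hpos]
  rwa [← smul_add, add_sub_cancel, norm_smul_of_nonneg (by positivity), ← div_eq_inv_mul,
    le_div_iff₀ hpos] at hnormalized

lemma lt_mul_norm_of_isMinOn_norm {C : Set X} (hC : Convex ℝ C) {z₀ z : X} (hz₀C : z₀ ∈ C)
    (hmin : IsMinOn norm C z₀) (hz : z ∈ C) {ρ s : ℝ} (hs : 0 ≤ s) (hdist : ρ < dist z₀ z)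
    (hρ : ρ < s * zetaConv X s * ‖z₀‖) : ρ < s * ‖z‖ := by
  by_contra! hle
  have hsz : s * ‖z₀‖ ≤ ‖z - z₀‖ := by
    calc s * ‖z₀‖ ≤ s * ‖z‖ := mul_le_mul_of_nonneg_left (hmin hz) hs
      _ ≤ ρ := hle
      _ ≤ ‖z - z₀‖ := by rw [← dist_eq_norm, dist_comm]; exact hdist.le
  have hzeta := zetaConv_mul_norm_le_of_isMinOn_norm hC hz₀C hmin hz hs hsz
  rw [mul_assoc] at hρ
  exact hρ.not_ge ((mul_le_mul_of_nonneg_left hzeta hs).trans hle)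

section Families

variable {ι : Type*} {K : ι → Set X} {r : ℕ → ℝ}

namespace IsHellySeq

lemma exists_finset_forall_lt_mul_norm (hr : IsHellySeq X r) (hconv : ∀ i, Convex ℝ (K i))
    (hcpt : ∀ i, IsCompact (K i)) {ρ : ℝ} (hfar : ∀ x, ∃ i, ∀ z ∈ K i, ρ < dist x z)
    {j : ℕ} (hj : 1 ≤ j) :
    ∃ J : Finset ι, J.Nonempty ∧ J.card ≤ j ∧ ∀ z ∈ ⋂ i ∈ J, K i, ρ < r j * ‖z‖ := by
  induction j, hj using Nat.le_induction with
  | base =>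
    obtain ⟨i, hi⟩ := hfar 0
    refine ⟨{i}, by simp, by simp, fun z hz => ?_⟩
    simpa [hr.2.1] using hi z (by simpa using hz)
  | succ j hj ih =>
    obtain ⟨J, hJne, hJcard, hJ⟩ := ih
    have hCcpt : IsCompact (⋂ i ∈ J, K i) := by
      obtain ⟨i₀, hi₀⟩ := hJne
      exact (hcpt i₀).of_isClosed_subset (isClosed_biInter fun i _ => (hcpt i).isClosed)
        (Set.biInter_subset_of_mem hi₀)
    rcases (⋂ i ∈ J, K i).eq_empty_or_nonempty with hempty | hnonempty
    · exact ⟨J, hJne, by omega, by simp [hempty]⟩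
    obtain ⟨z₀, hz₀, hmin⟩ := hCcpt.exists_isMinOn hnonempty continuous_norm.continuousOn
    obtain ⟨i, hi⟩ := hfar z₀
    refine ⟨insert i J, by simp, (J.card_insert_le i).trans (by omega), fun z hz => ?_⟩
    rw [Finset.set_biInter_insert] at hz
    refine lt_mul_norm_of_isMinOn_norm (convex_iInter₂ fun i _ => hconv i) hz₀ hmin hz.2
      (hr.1 (j + 1) (by omega)).1.le (hi z hz.1) ?_
    rw [hr.2.2 j hj]
    exact hJ z₀ hz₀

lemma exists_forall_infDist_le_of_isCompact (hr : IsHellySeq X r) {k : ℕ} (hk : 1 ≤ k)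
    (hconv : ∀ i, Convex ℝ (K i)) (hcpt : ∀ i, IsCompact (K i))
    (hball : ∀ J : Finset ι, J.card ≤ k → ∃ p ∈ Metric.closedBall (0 : X) 1, ∀ j ∈ J, p ∈ K j) :
    ∃ x : X, ∀ i, Metric.infDist x (K i) ≤ r k := by
  by_contra! hfar
  obtain ⟨J, -, hJcard, hJ⟩ := hr.exists_finset_forall_lt_mul_norm hconv hcpt (ρ := r k)
    (fun x => (hfar x).imp fun i hi z hz => hi.trans_le (Metric.infDist_le_dist_of_mem hz)) hk
  obtain ⟨p, hp, hpK⟩ := hball J hJcard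
  have hlt : r k < r k * ‖p‖ := hJ p (Set.mem_iInter₂.mpr hpK)
  exact hlt.not_ge (mul_le_of_le_one_right (hr.1 k hk).1.le (mem_closedBall_zero_iff.mp hp))

end IsHellySeq

theorem no_dim_helly_general [Fintype ι] (hr : IsHellySeq X r) {k : ℕ} (hk1 : 1 ≤ k)
    (hk : k ≤ Fintype.card ι) (hconv : ∀ i, Convex ℝ (K i))
    (hball : ∀ J : Finset ι, J.card = k → ∃ p ∈ Metric.closedBall (0 : X) 1, ∀ j ∈ J, p ∈ K j) :
    ∃ x : X, ∀ i, Metric.infDist x (K i) ≤ r k := by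
  have hball_le : ∀ J ∈ {J : Finset ι | J.card ≤ k},
      ∃ p ∈ Metric.closedBall (0 : X) 1, ∀ j ∈ J, p ∈ K j := fun J hJ => by
    obtain ⟨J', hJJ', hJ'⟩ := Finset.exists_superset_card_eq hJ hk
    obtain ⟨p, hp, hpK⟩ := hball J' hJ'
    exact ⟨p, hp, fun j hj => hpK j (hJJ' hj)⟩
  obtain ⟨L, hLconv, hLcpt, hLK, hLball⟩ :=
    exists_convex_isCompact_subset_of_finset_inter hconv hball_le
  obtain ⟨x, hx⟩ := hr.exists_forall_infDist_le_of_isCompact hk1 hLconv hLcpt hLball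
  refine ⟨x, fun i => (Metric.infDist_le_infDist_of_subset (hLK i) ?_).trans (hx i)⟩
  obtain ⟨p, -, hp⟩ := hLball {i} (by simpa using hk1)
  exact ⟨p, hp i (by simp)⟩

end Families

end NormedSpace

/-- **No-dimensional Helly theorem in uniformly convex Banach spaces.** -/
theorem no_dim_helly
    {X : Type*} [NormedAddCommGroup X] [NormedSpace ℝ X] [CompleteSpace X]
    (hX : UnifConvex X) {r : ℕ → ℝ} (hr : IsHellySeq X r)
    {k n : ℕ} (hk1 : 1 ≤ k) (hkn : k ≤ n)
    (K : Fin n → Set X) (hconv : ∀ i, Convex ℝ (K i))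
    (hball : ∀ J : Finset (Fin n), J.card = k →
      ∃ p ∈ Metric.closedBall (0 : X) 1, ∀ j ∈ J, p ∈ K j) :
    ∃ x : X, ∀ i : Fin n, Metric.infDist x (K i) ≤ r k :=
  no_dim_helly_general hr hk1 (by simpa using hkn) hconv hball
end

section
/- Let X be a uniformly convex real Banach space, let r be a Helly sequence for X, let k ≥ 1, and let 𝔽_1, …, 𝔽_k be finite nonempty families of convex subsets of X. Suppose m_1, …, m_k are natural numbers such that for every point p ∈ X and every i ∈ {1,…,k}, at least m_i members K of 𝔽_i satisfy dist(p, K) > 1. Then for every q ∈ X there are at least m_1·m_2·⋯·m_k rainbow k-tuples (K_1, …, K_k) ∈ 𝔽_1 × ⋯ × 𝔽_k such that either ⋂_{j=1}^{k} K_j is empty or dist(q, ⋂_{j=1}^{k} K_j) > 1/r_k. -/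
open scoped Classical

/-! The engine is that a point `p` of a convex set `K` almost nearest to `q` serves all `x ∈ K` far
from `p` at once. Given such an `x`, minimise the tilted norm `t ↦ ‖p + t • (x - p) - q‖ + ε * t` on
`[0, 1]`. The minimiser is close to `p`, and seen from it the norm has slope at least `-ε` towards
`x`. So, up to an error of order `ε`, it is the nearest point to `q` of a half-space containing `x`,
where `ζ_X` bounds `‖x - q‖` from below. By the recursion `r (k + 1) * ζ_X (r (k + 1)) = r k`, every
member of the next family that is far from `p` extends a far rainbow `k`-tuple with intersection `K`
to a far rainbow `(k + 1)`-tuple. -/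

open Filter Metric Set Topology

section Zeta

variable {X : Type*} [NormedAddCommGroup X] [NormedSpace ℝ X] {a b c ε : ℝ} {x y : X}

theorem QuasiOrth.norm_le_norm_add_smul (h : QuasiOrth y x) (t : ℝ) : ‖x‖ ≤ ‖x + t • y‖ := by
  obtain ⟨f, hf, hfx, hfy⟩ := h
  have hfxy : f (x + t • y) = ‖f‖ * ‖x‖ := by simp [hfx, hfy]
  refine le_of_mul_le_mul_left ?_ (norm_pos_iff.2 hf)
  calc ‖f‖ * ‖x‖ = f (x + t • y) := hfxy.symm
    _ ≤ ‖f (x + t • y)‖ := le_abs_self _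
    _ ≤ ‖f‖ * ‖x + t • y‖ := f.le_opNorm _

theorem zetaConv_le_norm_add_smul (hx : ‖x‖ = 1) (hy : ‖y‖ = 1) (h : QuasiOrth y x) (ε : ℝ) :
    zetaConv X ε ≤ ‖x + ε • y‖ := by
  refine csInf_le ⟨0, ?_⟩ ⟨x, y, hx, hy, h, rfl⟩
  rintro t ⟨x, y, -, -, -, rfl⟩
  exact norm_nonneg _

theorem zetaConv_eq_zero (h : ¬∃ x y : X, ‖x‖ = 1 ∧ ‖y‖ = 1 ∧ QuasiOrth y x) (ε : ℝ) :
    zetaConv X ε = 0 := by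
  have hempty : {t : ℝ | ∃ x y : X, ‖x‖ = 1 ∧ ‖y‖ = 1 ∧ QuasiOrth y x ∧ t = ‖x + ε • y‖} = ∅ :=
    eq_empty_of_forall_notMem fun _ ⟨x, y, hx, hy, hxy, _⟩ ↦ h ⟨x, y, hx, hy, hxy⟩
  rw [zetaConv, hempty, Real.sInf_empty]

theorem le_zetaConv (hX : ∃ x y : X, ‖x‖ = 1 ∧ ‖y‖ = 1 ∧ QuasiOrth y x)
    (h : ∀ x y : X, ‖x‖ = 1 → ‖y‖ = 1 → QuasiOrth y x → c ≤ ‖x + ε • y‖) :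
    c ≤ zetaConv X ε := by
  obtain ⟨x, y, hx, hy, hxy⟩ := hX
  refine le_csInf ⟨_, x, y, hx, hy, hxy, rfl⟩ ?_
  rintro t ⟨x, y, hx, hy, hxy, rfl⟩
  exact h x y hx hy hxy

theorem one_le_zetaConv (hX : ∃ x y : X, ‖x‖ = 1 ∧ ‖y‖ = 1 ∧ QuasiOrth y x) (ε : ℝ) :
    1 ≤ zetaConv X ε :=
  le_zetaConv hX fun _ _ hx _ hxy ↦ hx.symm.trans_le (hxy.norm_le_norm_add_smul ε)

theorem zetaConv_zero_le_one : zetaConv X 0 ≤ 1 := by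
  by_cases hX : ∃ x y : X, ‖x‖ = 1 ∧ ‖y‖ = 1 ∧ QuasiOrth y x
  · obtain ⟨x, y, hx, hy, hxy⟩ := hX
    simpa [hx] using zetaConv_le_norm_add_smul hx hy hxy 0
  · simp [zetaConv_eq_zero hX]

theorem zetaConv_nonneg (ε : ℝ) : 0 ≤ zetaConv X ε := by
  refine Real.sInf_nonneg ?_
  rintro t ⟨x, y, -, -, -, rfl⟩
  exact norm_nonneg _

theorem zetaConv_le_zetaConv_add (hc : 0 ≤ c)
    (h : ∀ x y : X, ‖x‖ = 1 → ‖y‖ = 1 → QuasiOrth y x → ‖x + a • y‖ ≤ ‖x + b • y‖ + c) :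
    zetaConv X a ≤ zetaConv X b + c := by
  by_cases hX : ∃ x y : X, ‖x‖ = 1 ∧ ‖y‖ = 1 ∧ QuasiOrth y x
  · refine sub_le_iff_le_add.1 (le_zetaConv hX fun x y hx hy hxy ↦ sub_le_iff_le_add.2 ?_)
    exact (zetaConv_le_norm_add_smul hx hy hxy a).trans (h x y hx hy hxy)
  · simpa [zetaConv_eq_zero hX] using hc

theorem QuasiOrth.monotoneOn_norm_add_smul (h : QuasiOrth y x) :
    MonotoneOn (fun t : ℝ ↦ ‖x + t • y‖) (Ici 0) := by
  intro a ha b _ hab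
  have hconv : ConvexOn ℝ univ fun t : ℝ ↦ ‖x + t • y‖ :=
    (convexOn_norm convex_univ).comp_affineMap (AffineMap.lineMap x (x + y)) |>.congr
      fun t _ ↦ by simp [AffineMap.lineMap_apply, add_comm]
  rcases (mem_Ici.1 ha).eq_or_lt with rfl | ha
  · simpa using h.norm_le_norm_add_smul b
  rcases hab.eq_or_lt with rfl | hab
  · exact le_rfl
  refine hconv.le_right_of_left_le'' (mem_univ 0) (mem_univ b) ha hab.le ?_
  simpa using h.norm_le_norm_add_smul a

theorem monotoneOn_zetaConv : MonotoneOn (zetaConv X) (Ici 0) := by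
  intro a ha b hb hab
  simpa using zetaConv_le_zetaConv_add le_rfl fun x y _ _ hxy ↦
    (hxy.monotoneOn_norm_add_smul ha hb hab).trans_eq (add_zero _).symm

theorem lipschitzWith_zetaConv : LipschitzWith 1 (zetaConv X) := by
  refine LipschitzWith.of_le_add fun a b ↦ zetaConv_le_zetaConv_add dist_nonneg fun x y _ hy _ ↦ ?_
  calc ‖x + a • y‖ = ‖(x + b • y) + (a - b) • y‖ := by congr 1; module
    _ ≤ ‖x + b • y‖ + ‖(a - b) • y‖ := norm_add_le _ _
    _ = ‖x + b • y‖ + dist a b := by rw [norm_smul, hy, mul_one, dist_eq_norm]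

theorem zetaConv_add_le (ha : 0 ≤ a) : zetaConv X (b + a) ≤ zetaConv X b + a := by
  simpa [abs_of_nonneg ha] using (lipschitzWith_zetaConv (X := X)).le_add_mul (b + a) b

end Zeta

section Support

variable {X : Type*} [NormedAddCommGroup X] [NormedSpace ℝ X] {f : X →L[ℝ] ℝ} {v w : X}

theorem opNorm_mul_le_of_forall_ball_lt {R u : ℝ} (hR : 0 < R) (h : ∀ z ∈ ball (0 : X) R, f z < u) :
    ‖f‖ * R ≤ u := by
  rw [← le_div_iff₀ hR]
  refine le_of_forall_lt fun c hc ↦ ?_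
  obtain ⟨z, hz, hcz⟩ := f.exists_lt_apply_of_lt_opNorm hc
  have hRz : ‖R • z‖ < R := by
    rw [norm_smul, Real.norm_of_nonneg hR.le]
    exact mul_lt_of_lt_one_right hR hz
  have hpos := h (R • z) (by simpa using hRz)
  have hneg := h (-(R • z)) (by simpa using hRz)
  simp only [map_neg, map_smul, smul_eq_mul] at hpos hneg
  rw [lt_div_iff₀ hR]
  calc c * R < ‖f z‖ * R := by gcongr
    _ = |R * f z| := by rw [Real.norm_eq_abs, abs_mul, abs_of_pos hR, mul_comm]
    _ < u := abs_lt.2 ⟨by linarith, hpos⟩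

theorem exists_support_functional (hv : v ≠ 0)
    (h : ∀ t ∈ Icc (0 : ℝ) 1, ‖v‖ ≤ ‖v + t • w‖) :
    ∃ f : X →L[ℝ] ℝ, f ≠ 0 ∧ f v = ‖f‖ * ‖v‖ ∧ 0 ≤ f w := by
  have hdisj : Disjoint (ball (0 : X) ‖v‖) (segment ℝ v (v + w)) := by
    rw [disjoint_right, segment_eq_image']
    rintro _ ⟨t, ht, rfl⟩
    simpa using h t ht
  obtain ⟨f, u, hball, hseg⟩ := geometric_hahn_banach_open (convex_ball 0 ‖v‖) isOpen_ball
    (convex_segment v (v + w)) hdisj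
  have hnorm : ‖f‖ * ‖v‖ ≤ u := opNorm_mul_le_of_forall_ball_lt (norm_pos_iff.2 hv) hball
  have hu : 0 < u := by simpa using hball 0 (mem_ball_self (norm_pos_iff.2 hv))
  have huv : u ≤ f v := hseg v (left_mem_segment ℝ v _)
  have hfv : f v ≤ ‖f‖ * ‖v‖ := (le_abs_self _).trans (f.le_opNorm v)
  have huw : u ≤ f v + f w := by simpa using hseg (v + w) (right_mem_segment ℝ v _)
  refine ⟨f, ?_, by linarith, by linarith⟩
  rintro rfl
  exact (hu.trans_le huv).ne rfl

theorem zetaConv_norm_le_of_apply_eq_zero (hf : f ≠ 0) (hv : ‖v‖ = 1) (hfv : f v = ‖f‖)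
    (hfw : f w = 0) : zetaConv X ‖w‖ ≤ ‖v + w‖ := by
  rcases eq_or_ne w 0 with rfl | hw
  · simpa [hv] using zetaConv_zero_le_one (X := X)
  have hquasi : QuasiOrth (‖w‖⁻¹ • w) v := ⟨f, hf, by rw [hv, mul_one, hfv], by simp [hfw]⟩
  simpa [smul_smul, hw] using zetaConv_le_norm_add_smul hv (norm_smul_inv_norm hw) hquasi ‖w‖

theorem zetaConv_norm_le_of_apply_nonneg (hf : f ≠ 0) (hv : ‖v‖ = 1) (hfv : f v = ‖f‖)
    (hfw : 0 ≤ f w) : zetaConv X ‖w‖ ≤ ‖v + w‖ := by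
  have hnorm : 0 < ‖f‖ := norm_pos_iff.2 hf
  -- `v + w'` is the point of the line `ℝ (v + w)` on the hyperplane through `v`.
  let t := ‖f‖ / (‖f‖ + f w)
  let w' := t • (v + w) - v
  have ht0 : 0 ≤ t := by positivity
  have ht1 : 0 ≤ 1 - t := sub_nonneg.2 (div_le_one_of_le₀ (by linarith) (by linarith))
  have hfw' : f w' = 0 := by
    simp only [w', t, map_sub, map_smul, map_add, smul_eq_mul, hfv]
    field_simp
    ring
  have hww' : ‖w‖ ≤ ‖w'‖ + (1 - t) * ‖v + w‖ := by
    calc ‖w‖ = ‖w' + (1 - t) • (v + w)‖ := by congr 1; module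
      _ ≤ ‖w'‖ + ‖(1 - t) • (v + w)‖ := norm_add_le _ _
      _ = ‖w'‖ + (1 - t) * ‖v + w‖ := by rw [norm_smul, Real.norm_of_nonneg ht1]
  have hshift : 0 ≤ (1 - t) * ‖v + w‖ := by positivity
  calc zetaConv X ‖w‖ ≤ zetaConv X (‖w'‖ + (1 - t) * ‖v + w‖) :=
        monotoneOn_zetaConv (norm_nonneg w) (add_nonneg (norm_nonneg w') hshift) hww'
    _ ≤ zetaConv X ‖w'‖ + (1 - t) * ‖v + w‖ := zetaConv_add_le hshift
    _ ≤ ‖v + w'‖ + (1 - t) * ‖v + w‖ := by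
        gcongr
        exact zetaConv_norm_le_of_apply_eq_zero hf hv hfv hfw'
    _ = ‖v + w‖ := by
        rw [add_sub_cancel, norm_smul, Real.norm_of_nonneg ht0]
        ring

theorem norm_mul_zetaConv_le_norm_add (hv : v ≠ 0)
    (h : ∀ t ∈ Icc (0 : ℝ) 1, ‖v‖ ≤ ‖v + t • w‖) :
    ‖v‖ * zetaConv X (‖w‖ / ‖v‖) ≤ ‖v + w‖ := by
  obtain ⟨f, hf, hfv, hfw⟩ := exists_support_functional hv h
  have hnorm : 0 < ‖v‖ := norm_pos_iff.2 hv
  have hunit := zetaConv_norm_le_of_apply_nonneg (v := ‖v‖⁻¹ • v) (w := ‖v‖⁻¹ • w) hf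
    (norm_smul_inv_norm hv) (by rw [map_smul, hfv, smul_eq_mul]; field_simp)
    (by rw [map_smul]; exact smul_nonneg (by positivity) hfw)
  rwa [← smul_add, norm_smul, norm_smul, norm_inv, norm_norm, le_inv_mul_iff₀ hnorm,
    inv_mul_eq_div] at hunit

theorem norm_mul_zetaConv_le_norm_add_of_slope_ge {ε : ℝ} (hε : 0 ≤ ε) (hv : v ≠ 0)
    (h : ∀ t ∈ Icc (0 : ℝ) 1, ‖v‖ ≤ ‖v + t • w‖ + ε * t) :
    ‖v‖ * zetaConv X (‖w‖ / ‖v‖) ≤ ‖v + w‖ + 2 * ε := by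
  have hnorm : 0 < ‖v‖ := norm_pos_iff.2 hv
  -- Adding `ε` times the unit vector along `v` turns the slope nonnegative.
  let s := ε / ‖v‖
  let w' := w + s • v
  have hs : 0 ≤ s := by positivity
  have hsv : s * ‖v‖ = ε := div_mul_cancel₀ ε hnorm.ne'
  have hnorm_smul : ‖s • v‖ = ε := by rw [norm_smul, Real.norm_of_nonneg hs, hsv]
  have hslope : ∀ t ∈ Icc (0 : ℝ) 1, ‖v‖ ≤ ‖v + t • w'‖ := by
    rintro t ⟨ht0, ht1⟩
    have hts : 0 < 1 + t * s := by positivity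
    have hmem : t / (1 + t * s) ∈ Icc (0 : ℝ) 1 :=
      ⟨by positivity, (div_le_one hts).2 (by nlinarith)⟩
    have hscale : v + t • w' = (1 + t * s) • (v + (t / (1 + t * s)) • w) := by
      rw [smul_add _ v, smul_smul, mul_div_cancel₀ _ hts.ne']
      module
    rw [hscale, norm_smul, Real.norm_of_nonneg hts.le]
    calc ‖v‖ = (1 + t * s) * (‖v‖ - ε * (t / (1 + t * s))) := by
          rw [← hsv]
          field_simp
          ring
      _ ≤ (1 + t * s) * ‖v + (t / (1 + t * s)) • w‖ := by
          gcongr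
          linarith [h _ hmem]
  have hww' : ‖w‖ / ‖v‖ ≤ ‖w'‖ / ‖v‖ + s := by
    rw [div_add' _ _ _ hnorm.ne', hsv]
    gcongr
    simpa [w', hnorm_smul] using norm_sub_le w' (s • v)
  have hzeta : zetaConv X (‖w‖ / ‖v‖) ≤ zetaConv X (‖w'‖ / ‖v‖) + s :=
    (monotoneOn_zetaConv (mem_Ici.2 (by positivity)) (mem_Ici.2 (by positivity)) hww').trans
      (zetaConv_add_le hs)
  calc ‖v‖ * zetaConv X (‖w‖ / ‖v‖) ≤ ‖v‖ * (zetaConv X (‖w'‖ / ‖v‖) + s) := by gcongr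
    _ = ‖v‖ * zetaConv X (‖w'‖ / ‖v‖) + ε := by rw [← hsv]; ring
    _ ≤ ‖v + w'‖ + ε := by gcongr; exact norm_mul_zetaConv_le_norm_add hv hslope
    _ ≤ ‖v + w‖ + ε + ε := by
        gcongr
        simpa [w', ← add_assoc, hnorm_smul] using norm_add_le (v + w) (s • v)
    _ = ‖v + w‖ + 2 * ε := by ring

end Support

section AlmostNearest

variable {X : Type*} [NormedAddCommGroup X] [NormedSpace ℝ X] {p q w : X} {K : Set X} {d ε : ℝ}

theorem exists_slope_ge_of_norm_le_add_sq (hε : 0 < ε) (hp : ‖p‖ ≤ d + ε ^ 2)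
    (hd : ∀ t ∈ Icc (0 : ℝ) 1, d ≤ ‖p + t • w‖) :
    ∃ s ∈ Icc (0 : ℝ) 1, s ≤ ε ∧ ‖p + s • w‖ ≤ d + ε ^ 2 ∧
      ∀ t ∈ Icc (0 : ℝ) 1, ‖p + s • w‖ ≤ ‖p + s • w + t • (1 - s) • w‖ + ε * t := by
  obtain ⟨s, hs, hmin⟩ := isCompact_Icc.exists_isMinOn (nonempty_Icc.2 zero_le_one)
    (f := fun t : ℝ ↦ ‖p + t • w‖ + ε * t) (by fun_prop)
  have hzero : ‖p + s • w‖ + ε * s ≤ ‖p‖ := by simpa using hmin (left_mem_Icc.2 zero_le_one)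
  refine ⟨s, hs, ?_, ?_, fun t ht ↦ ?_⟩
  · nlinarith [hd s hs]
  · nlinarith [hs.1]
  · have hmem : s + t * (1 - s) ∈ Icc (0 : ℝ) 1 :=
      ⟨by nlinarith [hs.1, hs.2, ht.1], by nlinarith [hs.1, hs.2, ht.2]⟩
    have hst : ‖p + s • w‖ + ε * s ≤ ‖p + (s + t * (1 - s)) • w‖ + ε * (s + t * (1 - s)) :=
      hmin hmem
    rw [add_assoc p, smul_smul, ← add_smul]
    nlinarith [mul_nonneg hε.le (mul_nonneg ht.1 hs.1)]

theorem mul_zetaConv_le_norm_add_of_norm_le_add_sq (h0d : 0 < d) (hε : 0 < ε) (hε1 : ε ≤ 1)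
    (hp : ‖p‖ ≤ d + ε ^ 2) (hd : ∀ t ∈ Icc (0 : ℝ) 1, d ≤ ‖p + t • w‖) :
    d * zetaConv X ((1 - ε) * ‖w‖ / (d + ε ^ 2)) ≤ ‖p + w‖ + 2 * ε := by
  obtain ⟨s, hs, hsε, hsp, hslope⟩ := exists_slope_ge_of_norm_le_add_sq hε hp hd
  have hdv : d ≤ ‖p + s • w‖ := hd s hs
  have hv : 0 < ‖p + s • w‖ := h0d.trans_le hdv
  have hratio : (1 - ε) * ‖w‖ / (d + ε ^ 2) ≤ ‖(1 - s) • w‖ / ‖p + s • w‖ := by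
    have h1s : 0 ≤ 1 - s := sub_nonneg.2 hs.2
    rw [norm_smul, Real.norm_of_nonneg h1s]
    gcongr
  have hratio0 : 0 ≤ (1 - ε) * ‖w‖ / (d + ε ^ 2) :=
    div_nonneg (mul_nonneg (sub_nonneg.2 hε1) (norm_nonneg w)) (by positivity)
  calc d * zetaConv X ((1 - ε) * ‖w‖ / (d + ε ^ 2))
      ≤ d * zetaConv X (‖(1 - s) • w‖ / ‖p + s • w‖) := by
        gcongr
        exact monotoneOn_zetaConv hratio0 (hratio0.trans hratio) hratio
    _ ≤ ‖p + s • w‖ * zetaConv X (‖(1 - s) • w‖ / ‖p + s • w‖) := by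
        gcongr
        exact zetaConv_nonneg _
    _ ≤ ‖p + s • w + (1 - s) • w‖ + 2 * ε :=
        norm_mul_zetaConv_le_norm_add_of_slope_ge hε.le (norm_pos_iff.1 hv) hslope
    _ = ‖p + w‖ + 2 * ε := by congr 2; module

theorem exists_mem_forall_one_le_dist_imp_le_dist (hK : Convex ℝ K) (hne : K.Nonempty)
    (hd : 0 < infDist q K) {c : ℝ} (hc : c < infDist q K * zetaConv X (1 / infDist q K)) :
    ∃ p ∈ K, ∃ c' > c, ∀ x ∈ K, 1 ≤ dist p x → c' ≤ dist q x := by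
  set d := infDist q K
  have hlim : Tendsto (fun ε : ℝ ↦ d * zetaConv X ((1 - ε) / (d + ε ^ 2)) - 2 * ε) (𝓝[>] 0)
      (𝓝 (d * zetaConv X (1 / d))) := by
    have hcont : ContinuousAt
        (fun ε : ℝ ↦ d * zetaConv X ((1 - ε) / (d + ε ^ 2)) - 2 * ε) 0 := by
      have hzeta : Continuous (zetaConv X) := lipschitzWith_zetaConv.continuous
      fun_prop (disch := simpa using hd.ne')
    simpa using hcont.tendsto.mono_left nhdsWithin_le_nhds
  obtain ⟨ε, hcε, hε0, hε1⟩ :=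
    ((hlim.eventually_const_lt hc).and (Ioc_mem_nhdsGT zero_lt_one)).exists
  obtain ⟨p, hp, hqp⟩ := (infDist_lt_iff hne).1 (lt_add_of_pos_right d (pow_pos hε0 2))
  refine ⟨p, hp, _, hcε, fun x hx hpx ↦ sub_le_iff_le_add.2 ?_⟩
  rw [dist_comm, dist_eq_norm] at hqp hpx ⊢
  have hseg : ∀ t ∈ Icc (0 : ℝ) 1, d ≤ ‖p - q + t • (x - p)‖ := fun t ht ↦ by
    rw [sub_add_eq_add_sub, ← dist_eq_norm, dist_comm]
    exact infDist_le_dist_of_mem (hK.add_smul_sub_mem hp hx ht)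
  have h1ε : 0 ≤ 1 - ε := sub_nonneg.2 hε1
  calc d * zetaConv X ((1 - ε) / (d + ε ^ 2))
      ≤ d * zetaConv X ((1 - ε) * ‖x - p‖ / (d + ε ^ 2)) := by
        gcongr
        refine monotoneOn_zetaConv (mem_Ici.2 (by positivity)) (mem_Ici.2 (by positivity)) ?_
        gcongr
        exact le_mul_of_one_le_right h1ε hpx
    _ ≤ ‖p - q + (x - p)‖ + 2 * ε :=
        mul_zetaConv_le_norm_add_of_norm_le_add_sq hd hε0 hε1 hqp.le hseg
    _ = ‖x - q‖ + 2 * ε := by congr 2; abel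

end AlmostNearest

section FarFrom

/-- `K` lies at distance more than `R` from `q`, where the empty set is infinitely far from every
point. The empty set is a separate case because `Metric.infDist q ∅ = 0`. Reducible, so that
`Finset.filter` finds the same decidability instance as for the disjunction itself. -/
abbrev FarFrom {X : Type*} [PseudoMetricSpace X] (q : X) (R : ℝ) (K : Set X) : Prop :=
  K = ∅ ∨ R < infDist q K

theorem farFrom_iff_exists_gt {X : Type*} [PseudoMetricSpace X] {q : X} {R : ℝ} {K : Set X} :
    FarFrom q R K ↔ ∃ R' > R, ∀ x ∈ K, R' ≤ dist q x := by
  rcases K.eq_empty_or_nonempty with rfl | hK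
  · simpa [FarFrom] using exists_gt R
  · simp only [FarFrom, hK.ne_empty, false_or]
    exact ⟨fun h ↦ ⟨_, h, fun x hx ↦ infDist_le_dist_of_mem hx⟩,
      fun ⟨R', hR, hR'⟩ ↦ hR.trans_le ((le_infDist hK).2 hR')⟩

variable {X : Type*} [NormedAddCommGroup X] [NormedSpace ℝ X] {q : X} {a b : ℝ} {K : Set X}

theorem exists_forall_farFrom_inter (ha : 0 < a) (hb : 0 < b) (hab : b * zetaConv X b = a)
    (hK : Convex ℝ K) (hfar : FarFrom q (1 / a) K) :
    ∃ p : X, ∀ L : Set X, 1 < infDist p L → FarFrom q (1 / b) (K ∩ L) := by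
  rcases K.eq_empty_or_nonempty with rfl | hne
  · exact ⟨q, fun L _ ↦ Or.inl (empty_inter L)⟩
  have hd : 1 / a < infDist q K := hfar.resolve_left hne.ne_empty
  have hd0 : 0 < infDist q K := (one_div_pos.2 ha).trans hd
  have hpair : ∃ x y : X, ‖x‖ = 1 ∧ ‖y‖ = 1 ∧ QuasiOrth y x := by
    by_contra hpair
    rw [zetaConv_eq_zero hpair, mul_zero] at hab
    exact ha.ne hab
  have hbd : 1 / b < infDist q K * zetaConv X (1 / infDist q K) := by
    have hzeta : 0 < zetaConv X b := zero_lt_one.trans_le (one_le_zetaConv hpair b)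
    rcases lt_or_ge (1 / b) (infDist q K) with h | h
    · exact h.trans_le (le_mul_of_one_le_right hd0.le (one_le_zetaConv hpair _))
    · calc 1 / b = 1 / a * zetaConv X b := by rw [← hab]; field_simp
        _ < infDist q K * zetaConv X b := by gcongr
        _ ≤ infDist q K * zetaConv X (1 / infDist q K) := by
          gcongr
          exact monotoneOn_zetaConv hb.le (one_div_pos.2 hd0).le ((le_one_div hb hd0).2 h)
  obtain ⟨p, -, R', hR', hp⟩ := exists_mem_forall_one_le_dist_imp_le_dist hK hne hd0 hbd
  refine ⟨p, fun L hL ↦ farFrom_iff_exists_gt.2 ⟨R', hR', fun x hx ↦ ?_⟩⟩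
  exact hp x hx.1 (hL.le.trans (infDist_le_dist_of_mem hx.2))

end FarFrom

section Counting

theorem iInter_fin_snoc {α : Type*} {n : ℕ} (T : Fin n → Set α) (L : Set α) :
    ⋂ j, (Fin.snoc T L : Fin (n + 1) → Set α) j = (⋂ j, T j) ∩ L := by
  ext x
  simp [Fin.forall_fin_succ']

theorem card_filter_piFinset_mul_le {n c : ℕ} {α : Fin (n + 1) → Type*} (S : ∀ i, Finset (α i))
    (P : (∀ i : Fin n, α i.castSucc) → Prop) [DecidablePred P]
    (Q : (∀ i, α i) → Prop) [DecidablePred Q]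
    (h : ∀ T ∈ Fintype.piFinset (Fin.init S), P T →
      c ≤ ((S (Fin.last n)).filter fun a ↦ Q (Fin.snoc T a)).card) :
    ((Fintype.piFinset (Fin.init S)).filter P).card * c ≤
      ((Fintype.piFinset S).filter Q).card := by
  let A := (Fintype.piFinset (Fin.init S)).filter P
  let B := fun T : ∀ i : Fin n, α i.castSucc ↦ (S (Fin.last n)).filter fun a ↦ Q (Fin.snoc T a)
  calc A.card * c ≤ ∑ T ∈ A, (B T).card :=
        Finset.card_nsmul_le_sum A _ c fun T hT ↦ h T (Finset.mem_filter.1 hT).1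
          (Finset.mem_filter.1 hT).2
    _ = (A.sigma B).card := (Finset.card_sigma A B).symm
    _ ≤ ((Fintype.piFinset S).filter Q).card := by
        refine Finset.card_le_card_of_injOn (fun z ↦ Fin.snoc z.1 z.2) ?_ ?_
        · rintro ⟨T, a⟩ hTa
          obtain ⟨hT, ha⟩ := Finset.mem_sigma.1 hTa
          obtain ⟨ha, hQ⟩ := Finset.mem_filter.1 ha
          refine Finset.mem_filter.2 ⟨Fin.mem_piFinset_iff_last_init.2 ⟨?_, ?_⟩, hQ⟩
          · simpa using ha
          · simpa using (Finset.mem_filter.1 hT).1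
        · rintro ⟨T, a⟩ - ⟨T', a'⟩ - hsnoc
          obtain ⟨rfl, rfl⟩ := Fin.snoc_inj.1 hsnoc
          rfl

end Counting

theorem no_dim_colorful_counting_general
    {X : Type*} [NormedAddCommGroup X] [NormedSpace ℝ X] {r : ℕ → ℝ} (hr : IsHellySeq X r)
    {k : ℕ} (hk1 : 1 ≤ k) (F : Fin k → Finset (Set X)) (hconv : ∀ i, ∀ K ∈ F i, Convex ℝ K)
    (m : Fin k → ℕ)
    (hm : ∀ p : X, ∀ i : Fin k, m i ≤ ((F i).filter (fun K => 1 < Metric.infDist p K)).card)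
    (q : X) :
    (∏ i : Fin k, m i) ≤
      ((Fintype.piFinset F).filter
        (fun T : Fin k → Set X =>
          (⋂ j : Fin k, T j) = ∅ ∨ 1 / r k < Metric.infDist q (⋂ j : Fin k, T j))).card := by
  obtain ⟨hr0, hr1, hrec⟩ := hr
  induction k, hk1 using Nat.le_induction with
  | base =>
    have hcard := card_filter_piFinset_mul_le (c := m 0) F (fun _ ↦ True)
      (fun T ↦ FarFrom q (1 / r 1) (⋂ j, T j)) fun T _ _ ↦
        (hm q 0).trans <| Finset.card_le_card <| Finset.monotone_filter_right _ fun L _ hL ↦ by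
          simpa [FarFrom, iInter_fin_snoc, hr1] using Or.inr hL
    simpa using hcard
  | succ k hk ih =>
    rw [Fin.prod_univ_castSucc]
    refine (Nat.mul_le_mul_right _ (ih (Fin.init F) (fun i ↦ hconv i.castSucc) (Fin.init m)
      fun p i ↦ hm p i.castSucc)).trans ?_
    refine card_filter_piFinset_mul_le F (fun T ↦ FarFrom q (1 / r k) (⋂ j, T j))
      (fun T ↦ FarFrom q (1 / r (k + 1)) (⋂ j, T j)) fun T hT hfar ↦ ?_
    have hTconv : Convex ℝ (⋂ j, T j) :=
      convex_iInter fun j ↦ hconv j.castSucc (T j) (Fintype.mem_piFinset.1 hT j)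
    obtain ⟨p, hp⟩ := exists_forall_farFrom_inter (hr0 k hk).1 (hr0 (k + 1) (by lia)).1
      (hrec k hk) hTconv hfar
    refine (hm p (Fin.last k)).trans <| Finset.card_le_card <|
      Finset.monotone_filter_right _ fun L _ hL ↦ ?_
    simpa only [iInter_fin_snoc] using hp L hL

/-- **Counting rainbow tuples far from a point (colorful Helly, counting form).** -/
theorem no_dim_colorful_counting
    {X : Type*} [NormedAddCommGroup X] [NormedSpace ℝ X] [CompleteSpace X]
    (hX : UnifConvex X) {r : ℕ → ℝ} (hr : IsHellySeq X r)
    {k : ℕ} (hk1 : 1 ≤ k)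
    (F : Fin k → Finset (Set X)) (hne : ∀ i, (F i).Nonempty)
    (hconv : ∀ i, ∀ K ∈ F i, Convex ℝ K)
    (m : Fin k → ℕ)
    (hm : ∀ p : X, ∀ i : Fin k,
      m i ≤ ((F i).filter (fun K => 1 < Metric.infDist p K)).card)
    (q : X) :
    (∏ i : Fin k, m i) ≤
      ((Fintype.piFinset F).filter
        (fun T : Fin k → Set X =>
          (⋂ j : Fin k, T j) = ∅ ∨ 1 / r k < Metric.infDist q (⋂ j : Fin k, T j))).card :=
  no_dim_colorful_counting_general hr hk1 F hconv m hm q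
end

section
/- Let X be a uniformly convex real Banach space, let r be a Helly sequence for X, let k ≥ 1, let α ∈ (0,1], and set β = 1 − (1−α)^{1/k}. Let 𝔽_1, …, 𝔽_k be finite nonempty families of convex subsets of X. If at least α·|𝔽_1|·⋯·|𝔽_k| of the rainbow k-tuples (K_1, …, K_k) ∈ 𝔽_1 × ⋯ × 𝔽_k are such that ⋂_{i=1}^{k} K_i contains a point of the closed unit ball of X, then there exist x ∈ X and i ∈ {1,…,k} such that at least β·|𝔽_i| members K of 𝔽_i satisfy dist(x, K) ≤ r_k. -/
open scoped Classical

/-!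
Choose a point of the unit ball in each rainbow intersection that contains one, let `S` be the
finite set of the chosen points, and replace every member `K` by the polytope `conv (S ∩ K) ⊆ K`, so
that points of least norm exist by compactness. For a rainbow tuple, let `p n` be the point of
least norm common to its first `n` polytopes, so that `p 0 = 0`. If each `p n` is at distance more
than `c` from the next member, then `c < r n * ‖p n‖` for all `n ≥ 1`: a hyperplane supports the
intersection at `p n`, so if `r (n + 1) * ‖p n‖ ≤ c ≤ ‖p (n + 1) - p n‖`, then the norm grows at
least by the factor `ζ (r (n + 1)) = r n / r (n + 1)`. For `c = r k` this gives `1 < ‖p k‖`, so each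
tuple that meets in a point of the unit ball has a member within `r k` of the point `p n` computed
from its predecessors.

If the theorem failed, more than a proportion `(1 - α) ^ (1 / k)` of each family would be far from
any given point. Choosing members one after the other, each far from the point computed from its
predecessors, one would obtain more than a proportion `1 - α` of tuples that do not meet the ball.
-/

section Counting

variable {ι A : Type*} [Fintype ι]

theorem card_filter_mul_le_card_filter_and_mul [DecidableEq ι] {F : ι → Finset A} {m : ℕ} (i : ι)
    {P Q : (ι → A) → Prop} [DecidablePred P] [DecidablePred Q]
    (hP : ∀ T a, P (Function.update T i a) ↔ P T)
    (hQ : ∀ T, m ≤ ((F i).filter fun a => Q (Function.update T i a)).card) :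
    ((Fintype.piFinset F).filter P).card * m ≤
      ((Fintype.piFinset F).filter fun T => P T ∧ Q T).card * (F i).card := by
  have update_mem {T : ι → A} (hT : T ∈ Fintype.piFinset F) {a : A} (ha : a ∈ F i) :
      Function.update T i a ∈ Fintype.piFinset F := by
    rw [Fintype.mem_piFinset] at hT ⊢
    exact Function.forall_update_iff T (p := fun j b => b ∈ F j) |>.2 ⟨ha, fun j _ => hT j⟩
  refine Finset.card_mul_le_card_mul (fun T T' => ∃ a, T' = Function.update T i a)
    (fun T hT => ?_) (fun T' hT' => ?_)
  · rw [Finset.mem_filter] at hT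
    refine (hQ T).trans
      (Finset.card_le_card_of_injOn (Function.update T i) (fun a ha => ?_)
        (Function.update_injective T i).injOn)
    rw [Finset.mem_coe, Finset.mem_filter] at ha
    rw [Finset.mem_coe, Finset.mem_bipartiteAbove, Finset.mem_filter]
    exact ⟨⟨update_mem hT.1 ha.1, (hP T a).2 hT.2, ha.2⟩, a, rfl⟩
  · refine (Finset.card_le_card fun T hT => ?_).trans
      (Finset.card_image_le (s := F i) (f := Function.update T' i))
    rw [Finset.mem_bipartiteBelow, Finset.mem_filter, Fintype.mem_piFinset] at hT
    obtain ⟨⟨hT, -⟩, a, rfl⟩ := hT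
    exact Finset.mem_image.2 ⟨T i, hT i, by simp⟩

theorem prod_lt_prod_of_nonneg_of_lt [Nonempty ι] {f g : ι → ℝ} (hf : ∀ i, 0 ≤ f i)
    (hfg : ∀ i, f i < g i) : ∏ i, f i < ∏ i, g i := by
  by_cases h : ∃ i, f i = 0
  · obtain ⟨i, hi⟩ := h
    rw [Finset.prod_eq_zero (Finset.mem_univ i) hi]
    exact Finset.prod_pos fun j _ => (hf j).trans_lt (hfg j)
  · push Not at h
    exact Finset.prod_lt_prod_of_nonempty (fun i _ => (hf i).lt_of_ne' (h i)) (fun i _ => hfg i)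
      Finset.univ_nonempty

variable [LinearOrder ι]

theorem prod_mul_card_le_card_filter_mul_prod {F : ι → Finset A} {m : ι → ℕ}
    {P : ι → (ι → A) → Prop} [∀ i, DecidablePred (P i)] (hP : ∀ i, DependsOn (P i) (Set.Iic i))
    (hm : ∀ i T, m i ≤ ((F i).filter fun a => P i (Function.update T i a)).card)
    (s : Finset ι) :
    (∏ i ∈ s, m i) * (Fintype.piFinset F).card ≤
      ((Fintype.piFinset F).filter fun T => ∀ i ∈ s, P i T).card * ∏ i ∈ s, (F i).card := by
  induction s using Finset.induction_on_max with
  | empty => simp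
  | insert i s hlt ih =>
    have hi : i ∉ s := fun h => (hlt i h).false
    have invariant (T : ι → A) (a : A) :
        (∀ j ∈ s, P j (Function.update T i a)) ↔ ∀ j ∈ s, P j T :=
      forall₂_congr fun j hj => iff_of_eq <| hP j fun l hl =>
        Function.update_of_ne (hl.trans_lt (hlt j hj)).ne a T
    simp only [Finset.prod_insert hi, Finset.forall_mem_insert, and_comm (a := P i _)]
    set N := ((Fintype.piFinset F).filter fun T => ∀ j ∈ s, P j T).card
    set N' := ((Fintype.piFinset F).filter fun T => (∀ j ∈ s, P j T) ∧ P i T).card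
    have hNN' : N * m i ≤ N' * (F i).card :=
      card_filter_mul_le_card_filter_and_mul i invariant (hm i)
    calc (m i * ∏ j ∈ s, m j) * (Fintype.piFinset F).card
        = ((∏ j ∈ s, m j) * (Fintype.piFinset F).card) * m i := by ring
      _ ≤ (N * ∏ j ∈ s, (F j).card) * m i := Nat.mul_le_mul_right _ ih
      _ = (N * m i) * ∏ j ∈ s, (F j).card := mul_right_comm _ _ _
      _ ≤ (N' * (F i).card) * ∏ j ∈ s, (F j).card := Nat.mul_le_mul_right _ hNN'
      _ = N' * ((F i).card * ∏ j ∈ s, (F j).card) := mul_assoc _ _ _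

theorem prod_le_card_filter_piFinset {F : ι → Finset A} (hF : ∀ i, (F i).Nonempty) {m : ι → ℕ}
    {P : ι → (ι → A) → Prop} [∀ i, DecidablePred (P i)] (hP : ∀ i, DependsOn (P i) (Set.Iic i))
    (hm : ∀ i T, m i ≤ ((F i).filter fun a => P i (Function.update T i a)).card) :
    ∏ i, m i ≤ ((Fintype.piFinset F).filter fun T => ∀ i, P i T).card := by
  have h := prod_mul_card_le_card_filter_mul_prod hP hm Finset.univ
  simp only [Finset.mem_univ, forall_const, Fintype.card_piFinset] at h
  exact Nat.le_of_mul_le_mul_right h (Finset.prod_pos fun i _ => (hF i).card_pos)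

theorem prod_lt_card_filter_piFinset [Nonempty ι] {F : ι → Finset A} (hF : ∀ i, (F i).Nonempty)
    {f : ι → ℝ} (hf : ∀ i, 0 ≤ f i)
    {P : ι → (ι → A) → Prop} [∀ i, DecidablePred (P i)]
    (hP : ∀ i, DependsOn (P i) (Set.Iic i))
    (hlt : ∀ i T, f i < ((F i).filter fun a => P i (Function.update T i a)).card) :
    ∏ i, f i < ((Fintype.piFinset F).filter fun T => ∀ i, P i T).card := by
  calc ∏ i, f i < ∏ i, ((⌊f i⌋₊ + 1 : ℕ) : ℝ) :=
        prod_lt_prod_of_nonneg_of_lt hf fun i => by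
          push_cast
          exact Nat.lt_floor_add_one (f i)
    _ = ((∏ i, (⌊f i⌋₊ + 1) : ℕ) : ℝ) := (Nat.cast_prod _ _).symm
    _ ≤ _ := Nat.cast_le.2 <| prod_le_card_filter_piFinset hF hP fun i T =>
        Nat.succ_le_of_lt <| (Nat.floor_lt (hf i)).2 (hlt i T)

theorem prod_lt_card_filter_of_dependsOn_Iio [Nonempty ι] {Y : Type*} {F : ι → Finset A}
    (hF : ∀ i, (F i).Nonempty) {f : ι → ℝ} (hf : ∀ i, 0 ≤ f i) {R : Y → A → Prop}
    [∀ y, DecidablePred (R y)] {y : ι → (ι → A) → Y} (hy : ∀ i, DependsOn (y i) (Set.Iio i))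
    (hlt : ∀ i y, f i < ((F i).filter (R y)).card) :
    ∏ i, f i < ((Fintype.piFinset F).filter fun T => ∀ i, R (y i T) (T i)).card := by
  have hdep (i : ι) : DependsOn (fun T => R (y i T) (T i)) (Set.Iic i) := fun T T' h => by
    simp only [hy i fun j hj => h j hj.le, h i le_rfl]
  refine prod_lt_card_filter_piFinset hF hf hdep fun i T => ?_
  have hyT (a : A) : y i (Function.update T i a) = y i T :=
    hy i fun j hj => Function.update_of_ne hj.ne a T
  simpa only [hyT, Function.update_self] using hlt i (y i T)

theorem exists_mul_card_le_card_filter_of_dependsOn_Iio [Nonempty ι] {Y : Type*}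
    {F : ι → Finset A} (hF : ∀ i, (F i).Nonempty) {R : Y → A → Prop}
    [∀ y, DecidablePred (R y)] {y : ι → (ι → A) → Y} (hy : ∀ i, DependsOn (y i) (Set.Iio i))
    {P : (ι → A) → Prop} [DecidablePred P]
    (hP : ∀ T ∈ Fintype.piFinset F, P T → ∃ i, R (y i T) (T i)) {c : ℝ} (hc : 0 ≤ c)
    (hcard : (1 - c ^ Fintype.card ι) * ∏ i, ((F i).card : ℝ) ≤
      ((Fintype.piFinset F).filter P).card) :
    ∃ y i, (1 - c) * (F i).card ≤ ((F i).filter (R y)).card := by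
  by_contra! hfew
  have hmany (i : ι) (y : Y) : c * (F i).card < ((F i).filter fun a => ¬R y a).card := by
    have hsplit : (((F i).filter (R y)).card : ℝ) + ((F i).filter fun a => ¬R y a).card =
        (F i).card := by
      exact_mod_cast Finset.card_filter_add_card_filter_not (s := F i) (R y)
    linarith [hfew y i]
  have hgood : c ^ Fintype.card ι * ∏ i, ((F i).card : ℝ) <
      ((Fintype.piFinset F).filter fun T => ∀ i, ¬R (y i T) (T i)).card := by
    simpa only [Finset.prod_mul_distrib, Finset.prod_const, Finset.card_univ] using
      prod_lt_card_filter_of_dependsOn_Iio hF (fun i => mul_nonneg hc (F i).card.cast_nonneg) hy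
        hmany
  have hdisj : Disjoint ((Fintype.piFinset F).filter P)
      ((Fintype.piFinset F).filter fun T => ∀ i, ¬R (y i T) (T i)) := by
    refine Finset.disjoint_filter.2 fun T hT hPT hgoodT => ?_
    obtain ⟨i, hi⟩ := hP T hT hPT
    exact hgoodT i hi
  have hle := Finset.card_le_card
    (Finset.union_subset (Finset.filter_subset P _)
      (Finset.filter_subset (fun T => ∀ i, ¬R (y i T) (T i)) (Fintype.piFinset F)))
  rw [Finset.card_union_of_disjoint hdisj, Fintype.card_piFinset, ← Nat.cast_le (α := ℝ)] at hle
  push_cast at hle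
  linarith

end Counting

section Geometry

variable {X : Type*} [NormedAddCommGroup X]

/-- A point of least norm in `C`; a junk value if `C` has no such point. -/
noncomputable def minNormPoint (C : Set X) : X :=
  Classical.epsilon fun p => p ∈ C ∧ IsMinOn norm C p

theorem minNormPoint_spec {C : Set X} (hC : IsCompact C) (hne : C.Nonempty) :
    minNormPoint C ∈ C ∧ IsMinOn norm C (minNormPoint C) :=
  Classical.epsilon_spec (hC.exists_isMinOn hne continuous_norm.continuousOn)

variable [NormedSpace ℝ X]

theorem exists_supporting_functional_of_isMinOn_norm {C : Set X} (hC : Convex ℝ C) {p : X}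
    (hpC : p ∈ C) (hmin : IsMinOn norm C p) (hp : p ≠ 0) :
    ∃ f : X →L[ℝ] ℝ, f ≠ 0 ∧ f p = ‖f‖ * ‖p‖ ∧ ∀ q ∈ C, f p ≤ f q := by
  have hp' : 0 < ‖p‖ := norm_pos_iff.2 hp
  have hdisj : Disjoint (Metric.ball (0 : X) ‖p‖) C := Set.disjoint_left.2 fun q hq hqC =>
    (mem_ball_zero_iff.1 hq).not_ge (hmin hqC)
  obtain ⟨f, t, hball, hCt⟩ :=
    geometric_hahn_banach_open (convex_ball (0 : X) ‖p‖) Metric.isOpen_ball hC hdisj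
  have hclosedBall : ∀ q : X, ‖q‖ ≤ ‖p‖ → f q ≤ t := by
    intro q hq
    have hclosure : q ∈ closure (Metric.ball (0 : X) ‖p‖) := by
      rwa [closure_ball _ hp'.ne', mem_closedBall_zero_iff]
    exact le_on_closure (fun a ha => (hball a ha).le) f.continuous.continuousOn
      continuousOn_const hclosure
  have ht0 : 0 < t := by simpa using hball 0 (Metric.mem_ball_self hp')
  have hnorm : ‖f‖ ≤ t / ‖p‖ := by
    refine ContinuousLinearMap.opNorm_le_of_unit_norm (by positivity) fun u hu => ?_
    have hle (a : X) (ha : ‖a‖ = 1) : f a ≤ t / ‖p‖ := by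
      rw [le_div_iff₀' hp', ← smul_eq_mul, ← map_smul]
      exact hclosedBall _ (by rw [norm_smul_of_nonneg hp'.le, ha, mul_one])
    rw [Real.norm_eq_abs, abs_le', ← map_neg]
    exact ⟨hle u hu, hle (-u) (by rwa [norm_neg])⟩
  have hft : f p ≤ t := hclosedBall p le_rfl
  refine ⟨f, ?_, le_antisymm ((le_abs_self _).trans (f.le_opNorm p)) ?_,
    fun q hq => hft.trans (hCt q hq)⟩
  · rintro rfl
    exact (hCt p hpC).not_gt ht0
  · exact ((le_div_iff₀ hp').1 hnorm).trans (hCt p hpC)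

namespace QuasiOrth

variable {v p : X}

theorem smul (h : QuasiOrth v p) (a : ℝ) {b : ℝ} (hb : 0 ≤ b) : QuasiOrth (a • v) (b • p) := by
  obtain ⟨f, hf, hfp, hfv⟩ := h
  refine ⟨f, hf, ?_, by simp [hfv]⟩
  rw [map_smul, smul_eq_mul, hfp, norm_smul_of_nonneg hb]
  ring

theorem norm_le_norm_add (h : QuasiOrth v p) : ‖p‖ ≤ ‖p + v‖ := by
  obtain ⟨f, hf, hfp, hfv⟩ := h
  refine le_of_mul_le_mul_left ?_ (norm_pos_iff.2 hf)
  calc ‖f‖ * ‖p‖ = f (p + v) := by rw [map_add, hfp, hfv, add_zero]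
    _ ≤ ‖f‖ * ‖p + v‖ := (le_abs_self _).trans (f.le_opNorm _)

end QuasiOrth

theorem zetaConv_le {ε : ℝ} {x y : X} (hx : ‖x‖ = 1) (hy : ‖y‖ = 1) (h : QuasiOrth y x) :
    zetaConv X ε ≤ ‖x + ε • y‖ :=
  csInf_le ⟨0, by rintro _ ⟨_, _, -, -, -, rfl⟩; exact norm_nonneg _⟩ ⟨x, y, hx, hy, h, rfl⟩

-- If no two unit vectors are quasi-orthogonal, then `zetaConv X ε = sInf ∅ = 0`.
theorem zetaConv_le_one_add {ε : ℝ} (hε : 0 ≤ ε) : zetaConv X ε ≤ 1 + ε := by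
  by_cases h : ∃ x y : X, ‖x‖ = 1 ∧ ‖y‖ = 1 ∧ QuasiOrth y x
  · obtain ⟨x, y, hx, hy, hq⟩ := h
    calc zetaConv X ε ≤ ‖x + ε • y‖ := zetaConv_le hx hy hq
      _ ≤ ‖x‖ + ‖ε • y‖ := norm_add_le _ _
      _ = 1 + ε := by rw [norm_smul_of_nonneg hε, hx, hy, mul_one]
  · have hempty : {t : ℝ | ∃ x y : X, ‖x‖ = 1 ∧ ‖y‖ = 1 ∧ QuasiOrth y x ∧ t = ‖x + ε • y‖} = ∅ :=
      Set.eq_empty_of_forall_notMem fun _ ⟨x, y, hx, hy, hq, _⟩ => h ⟨x, y, hx, hy, hq⟩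
    rw [zetaConv, hempty, Real.sInf_empty]
    positivity

namespace QuasiOrth

variable {v p : X}

theorem norm_mul_zetaConv_le (h : QuasiOrth v p) (hp : p ≠ 0) (hv : v ≠ 0) (ρ : ℝ) :
    ‖p‖ * zetaConv X ρ ≤ ‖p + (ρ * ‖p‖ / ‖v‖) • v‖ := by
  have hp' : 0 < ‖p‖ := norm_pos_iff.2 hp
  have hunit : zetaConv X ρ ≤ ‖‖p‖⁻¹ • p + ρ • ‖v‖⁻¹ • v‖ :=
    zetaConv_le (norm_smul_inv_norm (𝕜 := ℝ) hp) (norm_smul_inv_norm (𝕜 := ℝ) hv)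
      (h.smul _ (by positivity))
  calc ‖p‖ * zetaConv X ρ ≤ ‖p‖ * ‖‖p‖⁻¹ • p + ρ • ‖v‖⁻¹ • v‖ := by gcongr
    _ = ‖p + (ρ * ‖p‖ / ‖v‖) • v‖ := by
      rw [← norm_smul_of_nonneg hp'.le]
      congr 1
      match_scalars <;> field_simp

theorem norm_mul_zetaConv_le_norm_add (h : QuasiOrth v p) (hp : p ≠ 0) {ρ d : ℝ} (hρ : 0 ≤ ρ)
    (hd : 0 ≤ d) (hv : ρ * ‖p‖ ≤ ‖v‖ + d) : ‖p‖ * zetaConv X ρ ≤ ‖p + v‖ + d := by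
  rcases eq_or_ne v 0 with rfl | hv0
  · calc ‖p‖ * zetaConv X ρ ≤ ‖p‖ * (1 + ρ) := by gcongr; exact zetaConv_le_one_add hρ
      _ ≤ ‖p + 0‖ + d := by rw [norm_zero] at hv; rw [add_zero]; linarith
  set t := ρ * ‖p‖ / ‖v‖ with ht
  have ht0 : 0 ≤ t := by positivity
  refine (h.norm_mul_zetaConv_le hp hv0 ρ).trans ?_
  rcases le_total t 1 with ht1 | ht1
  · calc ‖p + t • v‖ = ‖(1 - t) • p + t • (p + v)‖ := by congr 1; module
      _ ≤ (1 - t) * ‖p‖ + t * ‖p + v‖ := by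
        rw [← norm_smul_of_nonneg ht0, ← norm_smul_of_nonneg (sub_nonneg.2 ht1)]
        exact norm_add_le _ _
      _ ≤ (1 - t) * ‖p + v‖ + t * ‖p + v‖ := by
        gcongr
        exact h.norm_le_norm_add
      _ ≤ ‖p + v‖ + d := by linarith
  · calc ‖p + t • v‖ = ‖(p + v) + (t - 1) • v‖ := by congr 1; module
      _ ≤ ‖p + v‖ + (t - 1) * ‖v‖ := by
        rw [← norm_smul_of_nonneg (sub_nonneg.2 ht1)]
        exact norm_add_le _ _
      _ = ‖p + v‖ + (ρ * ‖p‖ - ‖v‖) := by rw [ht]; field_simp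
      _ ≤ ‖p + v‖ + d := by linarith

end QuasiOrth

-- Moving `q` towards the origin until `f q = f p` makes `q - p` quasi-orthogonal to `p`; the length
-- `d` of this move is exactly the decrease of `‖q‖`.
theorem norm_mul_zetaConv_le_norm_of_apply_le {f : X →L[ℝ] ℝ} (hf : f ≠ 0) {p q : X} (hp : p ≠ 0)
    (hfp : f p = ‖f‖ * ‖p‖) (hfq : f p ≤ f q) {ρ : ℝ} (hρ : 0 ≤ ρ) (h : ρ * ‖p‖ ≤ ‖q - p‖) :
    ‖p‖ * zetaConv X ρ ≤ ‖q‖ := by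
  have hfp0 : 0 < f p := hfp ▸ mul_pos (norm_pos_iff.2 hf) (norm_pos_iff.2 hp)
  have hfq0 : 0 < f q := hfp0.trans_le hfq
  set s := f p / f q with hs
  have hs0 : 0 ≤ s := by positivity
  have hs1 : 0 ≤ 1 - s := sub_nonneg.2 ((div_le_one hfq0).2 hfq)
  have horth : QuasiOrth (s • q - p) p :=
    ⟨f, hf, hfp, by rw [map_sub, map_smul, smul_eq_mul, hs, div_mul_cancel₀ _ hfq0.ne', sub_self]⟩
  have hdist : ρ * ‖p‖ ≤ ‖s • q - p‖ + (1 - s) * ‖q‖ :=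
    calc ρ * ‖p‖ ≤ ‖q - p‖ := h
      _ = ‖(s • q - p) + (1 - s) • q‖ := by congr 1; module
      _ ≤ ‖s • q - p‖ + (1 - s) * ‖q‖ := by
        rw [← norm_smul_of_nonneg hs1]
        exact norm_add_le _ _
  calc ‖p‖ * zetaConv X ρ ≤ ‖p + (s • q - p)‖ + (1 - s) * ‖q‖ :=
        horth.norm_mul_zetaConv_le_norm_add hp hρ (by positivity) hdist
    _ = ‖q‖ := by
      rw [add_sub_cancel, norm_smul_of_nonneg hs0]
      ring

theorem IsHellySeq.lt_mul_norm {r : ℕ → ℝ} (hr : IsHellySeq X r) {C : ℕ → Set X} {p : ℕ → X}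
    (hanti : Antitone C) (hconv : ∀ n, Convex ℝ (C n)) (hp : ∀ n, p n ∈ C n)
    (hmin : ∀ n, IsMinOn norm (C n) (p n)) (hp0 : p 0 = 0) {c : ℝ} :
    ∀ n, (∀ i ≤ n, c < dist (p i) (p (i + 1))) → c < r (n + 1) * ‖p (n + 1)‖
  | 0, hfar => by simpa [hp0, hr.2.1] using hfar 0 le_rfl
  | n + 1, hfar => by
    have ih := hr.lt_mul_norm hanti hconv hp hmin hp0 n fun i hi => hfar i (hi.trans n.le_succ)
    have hr0 : 0 < r (n + 2) := (hr.1 (n + 2) (by lia)).1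
    have hmem : p (n + 2) ∈ C (n + 1) := hanti (n + 1).le_succ (hp (n + 2))
    rcases lt_or_ge c (r (n + 2) * ‖p (n + 1)‖) with hlarge | hsmall
    · exact hlarge.trans_le (mul_le_mul_of_nonneg_left (hmin (n + 1) hmem) hr0.le)
    have hne : p (n + 1) ≠ 0 := by
      intro h
      rw [h, norm_zero, mul_zero] at ih hsmall
      exact ih.not_ge hsmall
    obtain ⟨f, hf, hfp, hfC⟩ :=
      exists_supporting_functional_of_isMinOn_norm (hconv (n + 1)) (hp (n + 1)) (hmin (n + 1)) hne
    have hstep : r (n + 2) * ‖p (n + 1)‖ ≤ ‖p (n + 2) - p (n + 1)‖ := by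
      rw [← dist_eq_norm']
      exact hsmall.trans (hfar (n + 1) le_rfl).le
    calc c < r (n + 1) * ‖p (n + 1)‖ := ih
      _ = r (n + 2) * (‖p (n + 1)‖ * zetaConv X (r (n + 2))) := by
        rw [← hr.2.2 (n + 1) (by lia)]
        ring
      _ ≤ r (n + 2) * ‖p (n + 2)‖ := by
        gcongr
        exact norm_mul_zetaConv_le_norm_of_apply_le hf hne hfp (hfC _ hmem) hr0.le hstep

/-- The intersection of the first `n` polytopes `conv (S ∩ T j)` of a tuple `T`, for a finite set
`S`. It is cut down to the polytope `conv (S ∪ {0})` so that it is compact, and its point of least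
norm is `0`, already for `n = 0`. -/
def prefixHull (S : Set X) {k : ℕ} (T : Fin k → Set X) (n : ℕ) : Set X :=
  convexHull ℝ (insert 0 S) ∩ ⋂ j : Fin k, ⋂ _ : (j : ℕ) < n, convexHull ℝ (S ∩ T j)

section PrefixHull

variable {S : Set X} {k : ℕ}

theorem antitone_prefixHull (T : Fin k → Set X) : Antitone (prefixHull S T) := fun _ _ hmn =>
  Set.inter_subset_inter_right _ <| Set.iInter_mono fun _ => Set.iInter_mono' fun hj =>
    ⟨hj.trans_le hmn, subset_rfl⟩

theorem convex_prefixHull (T : Fin k → Set X) (n : ℕ) : Convex ℝ (prefixHull S T n) :=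
  (convex_convexHull ℝ _).inter <| convex_iInter₂ fun _ _ => convex_convexHull ℝ _

theorem isCompact_prefixHull (hS : S.Finite) (T : Fin k → Set X) (n : ℕ) :
    IsCompact (prefixHull S T n) :=
  ((hS.insert 0).isCompact_convexHull ℝ).inter_right <| isClosed_biInter fun j _ =>
    (hS.inter_of_left (T j)).isClosed_convexHull ℝ

theorem mem_prefixHull {q : X} (hqS : q ∈ S) {T : Fin k → Set X} (hqT : ∀ j, q ∈ T j) (n : ℕ) :
    q ∈ prefixHull S T n :=
  ⟨subset_convexHull ℝ _ (Set.mem_insert_of_mem 0 hqS),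
    Set.mem_iInter₂.2 fun j _ => subset_convexHull ℝ _ ⟨hqS, hqT j⟩⟩

theorem zero_mem_prefixHull_zero (T : Fin k → Set X) : 0 ∈ prefixHull S T 0 :=
  ⟨subset_convexHull ℝ _ (Set.mem_insert 0 S), by simp⟩

theorem prefixHull_succ_subset {T : Fin k → Set X} {j : Fin k} (hT : Convex ℝ (T j)) :
    prefixHull S T (j + 1) ⊆ T j :=
  Set.inter_subset_right.trans <| (Set.iInter₂_subset j j.val.lt_succ_self).trans <|
    convexHull_min Set.inter_subset_right hT

theorem dependsOn_prefixHull (i : Fin k) :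
    DependsOn (fun T => prefixHull S T i) (Set.Iio i) := fun T T' h => by
  have hhull : (⋂ j : Fin k, ⋂ _ : (j : ℕ) < i, convexHull ℝ (S ∩ T j)) =
      ⋂ j : Fin k, ⋂ _ : (j : ℕ) < i, convexHull ℝ (S ∩ T' j) :=
    Set.iInter₂_congr fun j hj => by rw [h j hj]
  exact congrArg (fun D => convexHull ℝ (insert 0 S) ∩ D) hhull

theorem IsHellySeq.exists_infDist_minNormPoint_le {r : ℕ → ℝ} (hr : IsHellySeq X r) (hk : 1 ≤ k)
    (hS : S.Finite) {T : Fin k → Set X} (hT : ∀ i, Convex ℝ (T i)) {q : X} (hqS : q ∈ S)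
    (hq : ‖q‖ ≤ 1) (hqT : ∀ i, q ∈ T i) :
    ∃ i : Fin k, Metric.infDist (minNormPoint (prefixHull S T i)) (T i) ≤ r k := by
  obtain ⟨m, rfl⟩ := Nat.exists_eq_add_of_le' hk
  by_contra! hfar
  have hp (n : ℕ) := minNormPoint_spec (isCompact_prefixHull hS T n) ⟨q, mem_prefixHull hqS hqT n⟩
  have hp0 : minNormPoint (prefixHull S T 0) = 0 :=
    norm_le_zero_iff.1 <| ((hp 0).2 (zero_mem_prefixHull_zero T)).trans_eq norm_zero
  have hr0 : 0 < r (m + 1) := (hr.1 (m + 1) hk).1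
  have hdist (n : ℕ) (hn : n ≤ m) : r (m + 1) <
      dist (minNormPoint (prefixHull S T n)) (minNormPoint (prefixHull S T (n + 1))) :=
    (hfar ⟨n, Nat.lt_succ_of_le hn⟩).trans_le <| Metric.infDist_le_dist_of_mem <|
      prefixHull_succ_subset (j := ⟨n, Nat.lt_succ_of_le hn⟩) (hT _) (hp (n + 1)).1
  have hlt := hr.lt_mul_norm (antitone_prefixHull T) (convex_prefixHull T) (fun n => (hp n).1)
    (fun n => (hp n).2) hp0 m hdist
  have hle : ‖minNormPoint (prefixHull S T (m + 1))‖ ≤ 1 :=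
    ((hp (m + 1)).2 (mem_prefixHull hqS hqT (m + 1))).trans hq
  exact hlt.not_ge (mul_le_of_le_one_right hr0.le hle)

end PrefixHull

end Geometry

theorem no_dim_colorful_fractional_helly_general
    {X : Type*} [NormedAddCommGroup X] [NormedSpace ℝ X]
    {r : ℕ → ℝ} (hr : IsHellySeq X r) {k : ℕ} (hk1 : 1 ≤ k)
    {α β : ℝ} (hα : α ≤ 1) (hβ : β = 1 - (1 - α) ^ ((1 : ℝ) / k))
    (F : Fin k → Finset (Set X)) (hne : ∀ i, (F i).Nonempty)
    (hconv : ∀ i, ∀ K ∈ F i, Convex ℝ K)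
    (hfrac : α * ∏ i : Fin k, ((F i).card : ℝ) ≤
      ((Fintype.piFinset F).filter
        (fun T : Fin k → Set X =>
          ∃ p ∈ Metric.closedBall (0 : X) 1, ∀ i : Fin k, p ∈ T i)).card) :
    ∃ x : X, ∃ i : Fin k, β * (F i).card ≤
      ((F i).filter (fun K => Metric.infDist x K ≤ r k)).card := by
  have : Nonempty (Fin k) := ⟨⟨0, hk1⟩⟩
  set meeting := (Fintype.piFinset F).filter fun T : Fin k → Set X =>
    ∃ p ∈ Metric.closedBall (0 : X) 1, ∀ i : Fin k, p ∈ T i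
  choose! q hq hqT using fun T (hT : T ∈ meeting) => (Finset.mem_filter.1 hT).2
  have hnear (T : Fin k → Set X) (hT : T ∈ Fintype.piFinset F)
      (hTq : ∃ p ∈ Metric.closedBall (0 : X) 1, ∀ i : Fin k, p ∈ T i) :
      ∃ i : Fin k, Metric.infDist (minNormPoint (prefixHull (q '' meeting) T i)) (T i) ≤ r k := by
    have hTm : T ∈ meeting := Finset.mem_filter.2 ⟨hT, hTq⟩
    exact hr.exists_infDist_minNormPoint_le hk1 (meeting.finite_toSet.image q)
      (fun i => hconv i _ (Fintype.mem_piFinset.1 hT i)) (Set.mem_image_of_mem q hTm)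
      (mem_closedBall_zero_iff.1 (hq T hTm)) (hqT T hTm)
  have hpow : ((1 - α) ^ ((1 : ℝ) / k)) ^ Fintype.card (Fin k) = 1 - α := by
    rw [Fintype.card_fin, one_div, Real.rpow_inv_natCast_pow (sub_nonneg.2 hα) (by lia)]
  rw [hβ]
  exact exists_mul_card_le_card_filter_of_dependsOn_Iio hne
    (fun i _ _ h => congrArg minNormPoint (dependsOn_prefixHull i h)) hnear
    (Real.rpow_nonneg (sub_nonneg.2 hα) _) (by rwa [hpow, sub_sub_cancel])

/-- **No-dimensional colorful fractional Helly theorem.** -/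
theorem no_dim_colorful_fractional_helly
    {X : Type*} [NormedAddCommGroup X] [NormedSpace ℝ X] [CompleteSpace X]
    (hX : UnifConvex X) {r : ℕ → ℝ} (hr : IsHellySeq X r)
    {k : ℕ} (hk1 : 1 ≤ k)
    {α β : ℝ} (hα : α ∈ Set.Ioc (0 : ℝ) 1) (hβ : β = 1 - (1 - α) ^ ((1 : ℝ) / k))
    (F : Fin k → Finset (Set X)) (hne : ∀ i, (F i).Nonempty)
    (hconv : ∀ i, ∀ K ∈ F i, Convex ℝ K)
    (hfrac : α * ∏ i : Fin k, ((F i).card : ℝ) ≤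
      ((Fintype.piFinset F).filter
        (fun T : Fin k → Set X =>
          ∃ p ∈ Metric.closedBall (0 : X) 1, ∀ i : Fin k, p ∈ T i)).card) :
    ∃ x : X, ∃ i : Fin k, β * (F i).card ≤
      ((F i).filter (fun K => Metric.infDist x K ≤ r k)).card :=
  no_dim_colorful_fractional_helly_general hr hk1 hα.2 hβ F hne hconv hfrac
end

section
/- Let K and L be convex subsets of the Euclidean space ℝ^d, let ρ_1, ρ_2 > 0, and let p be a point of K that is a nearest point of K to the origin, i.e., p ∈ K and ‖p‖ = dist(0, K). Assume ‖p‖ > ρ_1 and dist(p, L) > ρ_2. Then either K ∩ L is empty or dist(0, K ∩ L) > √(ρ_1² + ρ_2²). -/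
open scoped Classical

/-!
If `p` is a nearest point of the convex set `K` to `u`, then for every `x ∈ K` the triangle `u p x`
has no acute angle at `p`. By the law of cosines
`dist u p ^ 2 + dist p x ^ 2 ≤ dist u x ^ 2`, and if moreover `x ∈ L` then `infDist p L ≤ dist p x`.
-/

section InnerProductSpace

open Metric
open scoped RealInnerProductSpace

lemma dist_sq_add_dist_sq_le_iff_inner_vsub_vsub_nonpos {V P : Type*} [SeminormedAddCommGroup V]
    [InnerProductSpace ℝ V] [PseudoMetricSpace P] [NormedAddTorsor V P] {u p x : P} :
    dist u p ^ 2 + dist p x ^ 2 ≤ dist u x ^ 2 ↔ ⟪u -ᵥ p, x -ᵥ p⟫ ≤ 0 := by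
  have law_of_cosines := norm_sub_sq_real (u -ᵥ p) (x -ᵥ p)
  rw [vsub_sub_vsub_cancel_right, ← dist_eq_norm_vsub, ← dist_eq_norm_vsub, ← dist_eq_norm_vsub,
    dist_comm x p] at law_of_cosines
  constructor <;> intro h <;> linarith

variable {E : Type*} [NormedAddCommGroup E] [InnerProductSpace ℝ E] {K : Set E} {u p : E}

lemma inner_sub_sub_nonpos_of_dist_eq_infDist (hK : Convex ℝ K) (hpK : p ∈ K)
    (hnear : dist u p = infDist u K) {x : E} (hx : x ∈ K) : ⟪u - p, x - p⟫ ≤ 0 := by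
  rw [infDist_eq_iInf] at hnear
  simp only [dist_eq_norm] at hnear
  exact (norm_eq_iInf_iff_real_inner_le_zero hK hpK).1 hnear x hx

lemma sqrt_dist_sq_add_infDist_sq_le_infDist_inter {L : Set E} (hK : Convex ℝ K) (hpK : p ∈ K)
    (hnear : dist u p = infDist u K) (hne : (K ∩ L).Nonempty) :
    √(dist u p ^ 2 + infDist p L ^ 2) ≤ infDist u (K ∩ L) := by
  refine (le_infDist hne).2 fun x ⟨hxK, hxL⟩ ↦ Real.sqrt_le_iff.2 ⟨dist_nonneg, ?_⟩
  calc dist u p ^ 2 + infDist p L ^ 2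
    _ ≤ dist u p ^ 2 + dist p x ^ 2 := by
      gcongr
      · exact infDist_nonneg
      · exact infDist_le_dist_of_mem hxL
    _ ≤ dist u x ^ 2 := dist_sq_add_dist_sq_le_iff_inner_vsub_vsub_nonpos.2
      (inner_sub_sub_nonpos_of_dist_eq_infDist hK hpK hnear hxK)

theorem euclidean_min_deviation_general {L : Set E} (hK : Convex ℝ K) {ρ₁ ρ₂ : ℝ} (hρ₁ : 0 ≤ ρ₁)
    (hρ₂ : 0 ≤ ρ₂) (hpK : p ∈ K) (hnear : dist u p = infDist u K) (hp : ρ₁ < dist u p)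
    (hpL : ρ₂ < infDist p L) : K ∩ L = ∅ ∨ √(ρ₁ ^ 2 + ρ₂ ^ 2) < infDist u (K ∩ L) := by
  refine (K ∩ L).eq_empty_or_nonempty.imp_right fun hne ↦ ?_
  calc √(ρ₁ ^ 2 + ρ₂ ^ 2)
    _ < √(dist u p ^ 2 + infDist p L ^ 2) := by gcongr
    _ ≤ infDist u (K ∩ L) := sqrt_dist_sq_add_infDist_sq_le_infDist_inter hK hpK hnear hne

end InnerProductSpace

/-- **Euclidean minimal deviation (law-of-cosines corollary).** -/
theorem euclidean_min_deviation
    {d : ℕ} (K L : Set (EuclideanSpace ℝ (Fin d)))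
    (hK : Convex ℝ K) (hL : Convex ℝ L)
    {ρ₁ ρ₂ : ℝ} (hρ₁ : 0 < ρ₁) (hρ₂ : 0 < ρ₂)
    (p : EuclideanSpace ℝ (Fin d)) (hpK : p ∈ K)
    (hnear : ‖p‖ = Metric.infDist (0 : EuclideanSpace ℝ (Fin d)) K)
    (hp : ρ₁ < ‖p‖) (hpL : ρ₂ < Metric.infDist p L) :
    K ∩ L = ∅ ∨
      Real.sqrt (ρ₁ ^ 2 + ρ₂ ^ 2) <
        Metric.infDist (0 : EuclideanSpace ℝ (Fin d)) (K ∩ L) := by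
  rw [← dist_zero_left] at hnear hp
  exact euclidean_min_deviation_general hK hρ₁.le hρ₂.le hpK hnear hp hpL
end

section
/- Let X be a real normed space whose modulus of convexity is of power type q, i.e., there exist constants C_X > 0 and q ≥ 2 such that δ_X(ε) ≥ C_X·ε^q for all ε ∈ [0,1]. Let r be a Helly sequence for X and set C̃ = max{1, 2·(2/(q·C_X))^{1/q}}. Then r_k ≤ C̃·k^{−1/q} for every k ≥ 1. -/
open scoped Classical

/-!
If `y ⌐ x` with `‖x‖ = 1` and `t = ‖x + y‖`, then `x / t` and `(x + y) / t` lie in the unit ball,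
at distance `‖y‖ / t`, and the functional witnessing `y ⌐ x` shows that their midpoint has norm at
least `1 / t`. Hence `δ_X(‖y‖ / t) ≤ 1 - 1 / t`, which for power type `q` turns into
`C ε ^ q ≤ ζ ^ (q - 1) (ζ - 1)` with `ζ = ζ_X(ε)`.

By Bernoulli's inequality `q C ε ^ q ≤ P (P - 1)` with `P = ζ ^ q`, so `1 - P⁻¹` is bounded below by
a multiple of `ε ^ q`. For a Helly sequence, taking `ε = r (j + 1)`, this says that `(r j) ^ (-q)`
grows by at least a fixed amount at each step, hence at least linearly.
-/

section Convexity

variable {X : Type*} [NormedAddCommGroup X] [NormedSpace ℝ X] {x y : X} {ε C q : ℝ}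

theorem QuasiOrth.smul_left (h : QuasiOrth y x) (c : ℝ) : QuasiOrth (c • y) x := by
  obtain ⟨f, hf, hfx, hfy⟩ := h
  exact ⟨f, hf, hfx, by simp [hfy]⟩

theorem QuasiOrth.mul_norm_le_norm_smul_add (h : QuasiOrth y x) (a : ℝ) :
    a * ‖x‖ ≤ ‖a • x + y‖ := by
  obtain ⟨f, hf, hfx, hfy⟩ := h
  refine le_of_mul_le_mul_left ?_ (norm_pos_iff.mpr hf)
  calc ‖f‖ * (a * ‖x‖) = f (a • x + y) := by simp [hfx, hfy, mul_left_comm]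
    _ ≤ ‖f‖ * ‖a • x + y‖ := (le_abs_self _).trans (f.le_opNorm _)

theorem QuasiOrth.norm_le_norm_add_s14 (h : QuasiOrth y x) : ‖x‖ ≤ ‖x + y‖ := by
  simpa using h.mul_norm_le_norm_smul_add 1

theorem modConv_le_one_sub_norm_add_div_two (hx : ‖x‖ ≤ 1) (hy : ‖y‖ ≤ 1) (h : ε ≤ ‖x - y‖) :
    modConv X ε ≤ 1 - ‖x + y‖ / 2 := by
  refine csInf_le ⟨0, ?_⟩ ⟨x, y, hx, hy, h, rfl⟩
  rintro t ⟨a, b, ha, hb, -, rfl⟩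
  linarith [norm_add_le a b]

theorem modConv_le_one (X : Type*) [NormedAddCommGroup X] [NormedSpace ℝ X] (ε : ℝ) :
    modConv X ε ≤ 1 := by
  by_cases h : ∃ x y : X, ‖x‖ ≤ 1 ∧ ‖y‖ ≤ 1 ∧ ε ≤ ‖x - y‖
  · obtain ⟨x, y, hx, hy, hxy⟩ := h
    linarith [modConv_le_one_sub_norm_add_div_two hx hy hxy, norm_nonneg (x + y)]
  · push Not at h
    have hempty : {t : ℝ | ∃ x y : X, ‖x‖ ≤ 1 ∧ ‖y‖ ≤ 1 ∧ ε ≤ ‖x - y‖ ∧ t = 1 - ‖x + y‖ / 2} = ∅ :=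
      Set.eq_empty_of_forall_notMem fun _ ⟨x, y, hx, hy, hxy, _⟩ ↦ (h x y hx hy).not_ge hxy
    rw [modConv, hempty, Real.sInf_empty]
    exact zero_le_one

theorem QuasiOrth.modConv_le (h : QuasiOrth y x) :
    modConv X (‖y‖ / ‖x + y‖) ≤ 1 - ‖x‖ / ‖x + y‖ := by
  set t := ‖x + y‖ with ht
  have norm_inv_smul (z : X) : ‖t⁻¹ • z‖ = ‖z‖ / t := by
    rw [norm_smul, norm_inv, ht, norm_norm, inv_mul_eq_div]
  have hmid : 2 * (‖x‖ / t) ≤ ‖t⁻¹ • x + t⁻¹ • (x + y)‖ := by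
    rw [← smul_add, norm_inv_smul, ← add_assoc, ← two_smul ℝ x, ← mul_div_assoc]
    gcongr
    exact h.mul_norm_le_norm_smul_add 2
  have hmod : modConv X (‖y‖ / t) ≤ 1 - ‖t⁻¹ • x + t⁻¹ • (x + y)‖ / 2 := by
    apply modConv_le_one_sub_norm_add_div_two
    · exact (norm_inv_smul x).trans_le (div_le_one_of_le₀ h.norm_le_norm_add_s14 (norm_nonneg _))
    · exact (norm_inv_smul (x + y)).trans_le (div_self_le_one t)
    · rw [← smul_sub, norm_inv_smul, sub_add_cancel_left, norm_neg]
  linarith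

/-- The modulus of convexity of `X` is of power type `q` with constant `C`; as in the paper, only
`ε ∈ [0, 1]` is considered. -/
def HasPowerTypeConvexity (X : Type*) [NormedAddCommGroup X] [NormedSpace ℝ X] (C q : ℝ) : Prop :=
  ∀ ε ∈ Set.Icc (0 : ℝ) 1, C * ε ^ q ≤ modConv X ε

namespace HasPowerTypeConvexity

theorem const_le_one (h : HasPowerTypeConvexity X C q) : C ≤ 1 := by
  simpa using (h 1 (by simp)).trans (modConv_le_one X 1)

theorem mul_norm_rpow_le (h : HasPowerTypeConvexity X C q) (hyx : QuasiOrth y x) (hx : ‖x‖ = 1)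
    (hy : ‖y‖ ≤ 1) : C * ‖y‖ ^ q ≤ ‖x + y‖ ^ (q - 1) * (‖x + y‖ - 1) := by
  have hmod := hyx.modConv_le
  have ht : 1 ≤ ‖x + y‖ := hx ▸ hyx.norm_le_norm_add_s14
  set t := ‖x + y‖
  have ht0 : 0 < t := one_pos.trans_le ht
  have hpow : C * (‖y‖ / t) ^ q ≤ 1 - 1 / t :=
    (h _ ⟨by positivity, (div_le_one ht0).mpr (hy.trans ht)⟩).trans (hx ▸ hmod)
  calc C * ‖y‖ ^ q = C * (‖y‖ / t) ^ q * t ^ q := by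
        rw [Real.div_rpow (norm_nonneg y) ht0.le]
        field_simp
    _ ≤ (1 - 1 / t) * t ^ q := by gcongr
    _ = t ^ (q - 1) * (t - 1) := by
        rw [Real.rpow_sub_one ht0.ne']
        field_simp

end HasPowerTypeConvexity

/-- The value `zetaConv X ε = 0` is the junk value `sInf ∅`, taken when no admissible pair `x`, `y`
exists. -/
theorem zetaConv_mem_of_isClosed {s : Set ℝ} (hs : IsClosed s)
    (h : ∀ x y : X, ‖x‖ = 1 → ‖y‖ = 1 → QuasiOrth y x → ‖x + ε • y‖ ∈ s)
    (hζ : zetaConv X ε ≠ 0) : zetaConv X ε ∈ s := by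
  have hne : {t : ℝ | ∃ x y : X, ‖x‖ = 1 ∧ ‖y‖ = 1 ∧ QuasiOrth y x ∧ t = ‖x + ε • y‖}.Nonempty := by
    rw [Set.nonempty_iff_ne_empty]
    intro hempty
    exact hζ (by rw [zetaConv, hempty, Real.sInf_empty])
  refine closure_minimal ?_ hs (csInf_mem_closure hne ⟨0, ?_⟩)
  · rintro _ ⟨x, y, hx, hy, hyx, rfl⟩
    exact h x y hx hy hyx
  · rintro _ ⟨x, y, -, -, -, rfl⟩
    exact norm_nonneg _

theorem one_le_zetaConv_s14 (hζ : zetaConv X ε ≠ 0) : 1 ≤ zetaConv X ε :=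
  zetaConv_mem_of_isClosed isClosed_Ici
    (fun _ _ hx _ hyx ↦ hx ▸ (hyx.smul_left ε).norm_le_norm_add_s14) hζ

theorem HasPowerTypeConvexity.mul_rpow_le_zetaConv (h : HasPowerTypeConvexity X C q) (hq : 1 ≤ q)
    (hε : ε ∈ Set.Icc 0 1) (hζ : zetaConv X ε ≠ 0) :
    C * ε ^ q ≤ zetaConv X ε ^ (q - 1) * (zetaConv X ε - 1) := by
  have hcont : Continuous fun t : ℝ ↦ t ^ (q - 1) * (t - 1) :=
    (Real.continuous_rpow_const (sub_nonneg.mpr hq)).mul (continuous_id.sub continuous_const)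
  refine zetaConv_mem_of_isClosed (isClosed_le continuous_const hcont) (fun x y hx hy hyx ↦ ?_) hζ
  have hnorm : ‖ε • y‖ = ε := by rw [norm_smul, hy, mul_one, Real.norm_of_nonneg hε.1]
  have := h.mul_norm_rpow_le (hyx.smul_left ε) hx (hnorm.trans_le hε.2)
  rwa [hnorm] at this

end Convexity

section RealInequalities

variable {C q e t : ℝ}

theorem mul_sub_one_le_rpow_sub_one (hq : 1 ≤ q) (ht : 0 ≤ t) : q * (t - 1) ≤ t ^ q - 1 := by
  have := one_add_mul_self_le_rpow_one_add (s := t - 1) (by linarith) hq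
  rw [add_sub_cancel] at this
  linarith

theorem mul_rpow_le_rpow_mul_rpow_sub_one (hq : 1 ≤ q) (ht : 1 ≤ t)
    (h : C * e ^ q ≤ t ^ (q - 1) * (t - 1)) : q * C * e ^ q ≤ t ^ q * (t ^ q - 1) := by
  have hpow : t ^ (q - 1) ≤ t ^ q := Real.rpow_le_rpow_of_exponent_le ht (by linarith)
  calc q * C * e ^ q = q * (C * e ^ q) := mul_assoc _ _ _
    _ ≤ q * (t ^ (q - 1) * (t - 1)) := by gcongr
    _ = t ^ (q - 1) * (q * (t - 1)) := mul_left_comm _ _ _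
    _ ≤ t ^ q * (t ^ q - 1) :=
        mul_le_mul hpow (mul_sub_one_le_rpow_sub_one hq (by linarith))
          (mul_nonneg (by linarith) (by linarith)) (by positivity)

theorem min_half_div_four_le_one_sub_inv {a p : ℝ} (hp : 1 ≤ p) (h : a ≤ p * (p - 1)) :
    min (1 / 2) (a / 4) ≤ 1 - p⁻¹ := by
  have hp0 : 0 < p := one_pos.trans_le hp
  rcases le_total 2 p with h2 | h2
  · have : p⁻¹ ≤ 2⁻¹ := inv_anti₀ two_pos h2
    exact (min_le_left _ _).trans (by linarith)
  · refine (min_le_right _ _).trans ?_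
    calc a / 4 ≤ p * (p - 1) / 4 := by gcongr
      _ ≤ p * (p - 1) / (p * p) := by
          have : p * p ≤ 4 := by nlinarith
          have : 0 ≤ p * (p - 1) := mul_nonneg hp0.le (by linarith)
          gcongr
      _ = 1 - p⁻¹ := by field_simp

theorem inv_mul_rpow_add_min_le_inv_rpow (hq : 1 ≤ q) (he : e ∈ Set.Ioc 0 1) (ht : 1 ≤ t)
    (h : C * e ^ q ≤ t ^ (q - 1) * (t - 1)) :
    ((e * t) ^ q)⁻¹ + min (1 / 2) (q * C / 4) ≤ (e ^ q)⁻¹ := by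
  have hq0 : 0 ≤ q := by linarith
  have he0 : 0 < e ^ q := Real.rpow_pos_of_pos he.1 q
  have he1 : e ^ q ≤ 1 := Real.rpow_le_one he.1.le he.2 hq0
  have hgap : min (1 / 2) (q * C * e ^ q / 4) ≤ 1 - (t ^ q)⁻¹ :=
    min_half_div_four_le_one_sub_inv (Real.one_le_rpow ht hq0)
      (mul_rpow_le_rpow_mul_rpow_sub_one hq ht h)
  have hscale : min (1 / 2) (q * C / 4) * e ^ q ≤ min (1 / 2) (q * C * e ^ q / 4) := by
    rw [min_mul_of_nonneg _ _ he0.le]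
    exact min_le_min (by linarith) (by linarith)
  calc ((e * t) ^ q)⁻¹ + min (1 / 2) (q * C / 4)
      = ((t ^ q)⁻¹ + min (1 / 2) (q * C / 4) * e ^ q) * (e ^ q)⁻¹ := by
        rw [Real.mul_rpow he.1.le (by linarith)]
        field_simp
    _ ≤ 1 * (e ^ q)⁻¹ := by
        gcongr
        linarith
    _ = (e ^ q)⁻¹ := one_mul _

theorem max_two_four_div_rpow_le (hC : 0 < C) (hC1 : C ≤ 1) (hq : 1 ≤ q) :
    max 2 (4 / (q * C)) ^ (1 / q) ≤ 2 * (2 / (q * C)) ^ (1 / q) := by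
  have hq0 : 0 < q := by linarith
  have hqC : q * C ≤ q := mul_le_of_le_one_right hq0.le hC1
  have hbern : 1 + q ≤ (2 : ℝ) ^ q := by
    linarith [mul_sub_one_le_rpow_sub_one hq zero_le_two]
  calc max 2 (4 / (q * C)) ^ (1 / q) ≤ (2 ^ q * (2 / (q * C))) ^ (1 / q) := by
        gcongr
        rw [← mul_div_assoc]
        refine max_le ?_ (by gcongr; linarith)
        rw [le_div_iff₀ (by positivity)]
        linarith
    _ = 2 * (2 / (q * C)) ^ (1 / q) := by
        rw [Real.mul_rpow (by positivity) (by positivity), one_div,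
          Real.rpow_rpow_inv zero_le_two hq0.ne']

end RealInequalities

theorem IsHellySeq.mul_min_le_inv_rpow {X : Type*} [NormedAddCommGroup X] [NormedSpace ℝ X]
    {C q : ℝ} {r : ℕ → ℝ} (hr : IsHellySeq X r) (hX : HasPowerTypeConvexity X C q) (hq : 1 ≤ q)
    {k : ℕ} (hk : 1 ≤ k) : k * min (1 / 2) (q * C / 4) ≤ (r k ^ q)⁻¹ := by
  obtain ⟨hmem, hr1, hrec⟩ := hr
  induction k, hk using Nat.le_induction with
  | base =>
    have : min (1 / 2) (q * C / 4) ≤ 1 / 2 := min_le_left _ _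
    rw [hr1, Real.one_rpow, inv_one, Nat.cast_one, one_mul]
    linarith
  | succ j hj ih =>
    have he := hmem (j + 1) (by lia)
    have hζ : zetaConv X (r (j + 1)) ≠ 0 := right_ne_zero_of_mul (hrec j hj ▸ (hmem j hj).1.ne')
    have hstep := inv_mul_rpow_add_min_le_inv_rpow hq he (one_le_zetaConv_s14 hζ)
      (hX.mul_rpow_le_zetaConv hq (Set.Ioc_subset_Icc_self he) hζ)
    rw [hrec j hj] at hstep
    push_cast
    linarith

theorem helly_sequence_power_type_bound_general {X : Type*} [NormedAddCommGroup X]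
    [NormedSpace ℝ X] {C q : ℝ} (hC : 0 < C) (hq : 1 ≤ q) (hX : HasPowerTypeConvexity X C q)
    {r : ℕ → ℝ} (hr : IsHellySeq X r) {k : ℕ} (hk : 1 ≤ k) :
    r k ≤ max 2 (4 / (q * C)) ^ (1 / q) * (k : ℝ) ^ (-(1 / q)) := by
  have hq0 : 0 < q := by linarith
  have hk0 : (0 : ℝ) < k := by exact_mod_cast hk
  have hrk : 0 < r k := (hr.1 k hk).1
  set D := max 2 (4 / (q * C))
  have hD : 0 < D := lt_max_of_lt_left two_pos
  have hDinv : D⁻¹ ≤ min (1 / 2) (q * C / 4) := by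
    rw [← inv_div 2, ← inv_div 4, div_one]
    exact le_min (inv_anti₀ two_pos (le_max_left _ _))
      (inv_anti₀ (by positivity) (le_max_right _ _))
  have hgrowth : k / D ≤ (r k ^ q)⁻¹ :=
    (mul_le_mul_of_nonneg_left hDinv hk0.le).trans (hr.mul_min_le_inv_rpow hX hq hk)
  have hpow : r k ^ q ≤ D / k := by
    rw [← inv_div]
    exact (le_inv_comm₀ (by positivity) (by positivity)).mp hgrowth
  calc r k ≤ (D / k) ^ q⁻¹ := (Real.le_rpow_inv_iff_of_pos hrk.le (by positivity) hq0).mpr hpow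
    _ = D ^ (1 / q) * (k : ℝ) ^ (-(1 / q)) := by
        rw [Real.div_rpow hD.le hk0.le, Real.rpow_neg hk0.le, one_div, div_eq_mul_inv]

/-- **Power-type bound on the Helly sequence.** If the modulus of convexity of `X` is
of power type `q`, then `r_k ≤ C̃ k^{-1/q}` with
`C̃ = max {1, 2 (2/(q C_X))^{1/q}}`. -/
theorem helly_sequence_power_type_bound
    {X : Type*} [NormedAddCommGroup X] [NormedSpace ℝ X]
    {C_X q : ℝ} (hC : 0 < C_X) (hq : 2 ≤ q)
    (hpow : ∀ ε ∈ Set.Icc (0 : ℝ) 1, C_X * ε ^ q ≤ modConv X ε)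
    {r : ℕ → ℝ} (hr : IsHellySeq X r) :
    ∀ k : ℕ, 1 ≤ k →
      r k ≤ max 1 (2 * (2 / (q * C_X)) ^ (1 / q)) * (k : ℝ) ^ (-(1 / q)) := by
  intro k hk
  refine (helly_sequence_power_type_bound_general hC (by linarith) hpow hr hk).trans ?_
  gcongr
  have hC1 : C_X ≤ 1 := HasPowerTypeConvexity.const_le_one hpow
  exact (max_two_four_div_rpow_le hC hC1 (by linarith)).trans (le_max_right _ _)
end
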